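/- arXiv:quant-ph/0001108 — 6 statements merged into one kernel-verified Lean document; each statement's English description precedes it below -/
import Mathlib

section
/- Let $V$ be a finite-dimensional nonzero complex vector space with a direct sum decomposition $V = W_0 \oplus W_1 \oplus \cdots \oplus W_{n-1}$ (the subspaces $W_i$ are independent and span $V$), and let $T : V \to V$ be a linear automorphism such that $T(W_i) = W_{i+1 \bmod n}$ for all $i$. Then for every eigenvalue $\mu$ of $T$ and every complex number $\zeta$ with $\zeta^n = 1$, the product $\zeta\mu$ is also an eigenvalue of $T$. -/
/-- If `V = W₀ ⊕ ⋯ ⊕ W_{n-1}` is a direct sum decomposition of a nonzero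
finite-dimensional complex vector space and `T` is a linear automorphism with
`T(Wᵢ) = W_{i+1 mod n}`, then the eigenvalue set of `T` is invariant under
multiplication by `n`-th roots of unity. -/
theorem stmt_0 {V : Type*} [AddCommGroup V] [Module ℂ V] [FiniteDimensional ℂ V]
    [Nontrivial V] {n : ℕ} [NeZero n] (W : Fin n → Submodule ℂ V)
    (hindep : iSupIndep W) (hspan : ⨆ i, W i = ⊤)
    (T : V ≃ₗ[ℂ] V)
    (hT : ∀ i : Fin n, (W i).map (T : V →ₗ[ℂ] V) = W (i + 1))
    (μ : ℂ) (hμ : Module.End.HasEigenvalue (T : V →ₗ[ℂ] V) μ)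
    (ζ : ℂ) (hζ : ζ ^ n = 1) :
    Module.End.HasEigenvalue (T : V →ₗ[ℂ] V) (ζ * μ) := by
  obtain ⟨v, hv⟩ := hμ.exists_hasEigenvector
  have hTv : T v = μ • v := hv.apply_eq_smul
  have hvtop : v ∈ ⨆ i, W i := by rw [hspan]; trivial
  obtain ⟨f, hf, hsum⟩ := (Submodule.mem_iSup_iff_exists_finsupp W v).mp hvtop
  rw [Finsupp.sum_fintype _ _ (fun _ => rfl)] at hsum
  have hind := (iSupIndep_iff_finsetSum_eq_imp_eq W).mp hindep
  have key : ∀ i, T (f (i - 1)) = μ • f i := by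
    intro i
    refine hind Finset.univ (fun i => T (f (i - 1))) (fun i => μ • f i) ?_ ?_ i
      (Finset.mem_univ i)
    · intro j _
      refine ⟨?_, (W j).smul_mem _ (hf j)⟩
      have h := Submodule.mem_map_of_mem (f := (T : V →ₗ[ℂ] V)) (hf (j - 1))
      rw [hT, sub_add_cancel] at h
      exact h
    · rw [← Finset.smul_sum, hsum, ← hTv, ← hsum, map_sum]
      exact Equiv.sum_comp (Equiv.subRight (1 : Fin n)) (fun i => T (f i))
  have key2 : ∀ i, T (f i) = μ • f (i + 1) := by
    intro i
    have h := key (i + 1)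
    rwa [add_sub_cancel_right] at h
  have hζ0 : ζ ≠ 0 := by
    rintro rfl
    rw [zero_pow (NeZero.ne n)] at hζ
    exact zero_ne_one hζ
  have hinv : ζ⁻¹ ^ n = 1 := by rw [inv_pow, hζ, inv_one]
  have hc : ∀ i : Fin n, ζ⁻¹ ^ (i : ℕ) = ζ * ζ⁻¹ ^ ((i + 1 : Fin n) : ℕ) := by
    intro i
    have h1 : ζ⁻¹ ^ ((i + 1 : Fin n) : ℕ) = ζ⁻¹ ^ ((i : ℕ) + 1) := by
      rw [Fin.val_add, ← pow_eq_pow_mod _ hinv, pow_add, pow_add, Fin.val_one',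
        ← pow_eq_pow_mod _ hinv]
    rw [h1, pow_succ]
    field_simp
  refine Module.End.hasEigenvalue_of_hasEigenvector
    (x := ∑ i : Fin n, ζ⁻¹ ^ (i : ℕ) • f i) ⟨?_, ?_⟩
  · rw [Module.End.mem_eigenspace_iff]
    change T _ = _
    rw [map_sum, Finset.smul_sum,
      ← Equiv.sum_comp (Equiv.addRight (1 : Fin n))
        (fun i : Fin n => (ζ * μ) • ζ⁻¹ ^ (i : ℕ) • f i)]
    refine Finset.sum_congr rfl fun i _ => ?_
    rw [map_smul, key2, hc i, smul_smul, smul_smul, Equiv.coe_addRight]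
    congr 1
    ring
  · intro h0
    apply hv.2
    rw [← hsum]
    refine Finset.sum_eq_zero fun i hi => ?_
    have h := hind Finset.univ (fun i => ζ⁻¹ ^ (i : ℕ) • f i) (fun _ => 0)
      (fun j _ => ⟨(W j).smul_mem _ (hf j), (W j).zero_mem⟩) (by simpa using h0) i hi
    exact (smul_eq_zero.mp h).resolve_left (pow_ne_zero _ (inv_ne_zero hζ0))
end

section
/- Let $V$ be a finite-dimensional complex vector space with a direct sum decomposition $V = W_0 \oplus W_1 \oplus \cdots \oplus W_{n-1}$ into $n \geq 3$ nonzero subspaces, and let $T : V \to V$ be a linear automorphism with $T(W_i) = W_{i+1 \bmod n}$ for all $i$. Then $T$ has at least three distinct eigenvalues. -/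
/-- If `V = W₀ ⊕ ⋯ ⊕ W_{n-1}` (`n ≥ 3`) is a direct sum decomposition of a
finite-dimensional complex vector space into nonzero subspaces and `T` is a linear
automorphism with `T(Wᵢ) = W_{i+1 mod n}`, then `T` has at least three distinct
eigenvalues. -/
theorem stmt_2 {V : Type*} [AddCommGroup V] [Module ℂ V] [FiniteDimensional ℂ V]
    {n : ℕ} [NeZero n] (hn : 3 ≤ n) (W : Fin n → Submodule ℂ V)
    (hW : ∀ i, W i ≠ ⊥)
    (hindep : iSupIndep W) (hspan : ⨆ i, W i = ⊤)
    (T : V ≃ₗ[ℂ] V)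
    (hT : ∀ i : Fin n, (W i).map (T : V →ₗ[ℂ] V) = W (i + 1)) :
    ∃ a b c : ℂ, a ≠ b ∧ a ≠ c ∧ b ≠ c ∧
      Module.End.HasEigenvalue (T : V →ₗ[ℂ] V) a ∧
      Module.End.HasEigenvalue (T : V →ₗ[ℂ] V) b ∧
      Module.End.HasEigenvalue (T : V →ₗ[ℂ] V) c := by
  have hmem : ∀ w ∈ W 0, ∀ k : ℕ, ((T : V →ₗ[ℂ] V) ^ k) w ∈ W (Fin.ofNat n k) := by
    intro w hw k
    induction k with
    | zero =>
      have h0 : Fin.ofNat n 0 = 0 := by ext; simp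
      rw [h0]; simpa using hw
    | succ k ih =>
      have h1 : Fin.ofNat n (k + 1) = Fin.ofNat n k + 1 := by
        ext; simp [Fin.val_add]
      rw [h1, ← hT, pow_succ']
      exact Submodule.mem_map_of_mem ih
  have hnn : Fin.ofNat n n = 0 := by ext; simp
  have hmap : ∀ w ∈ W 0, ((T : V →ₗ[ℂ] V) ^ n) w ∈ W 0 := by
    intro w hw
    have := hmem w hw n
    rwa [hnn] at this
  haveI : Nontrivial (W 0) := Submodule.nontrivial_iff_ne_bot.mpr (hW 0)
  obtain ⟨μ, hμ⟩ := Module.End.exists_eigenvalue (((T : V →ₗ[ℂ] V) ^ n).restrict hmap)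
  obtain ⟨w', hw'⟩ := hμ.exists_hasEigenvector
  obtain ⟨w, hw⟩ := w'
  have hw0 : w ≠ 0 := by
    intro h
    exact hw'.2 (by simp [h])
  have hTw : ((T : V →ₗ[ℂ] V) ^ n) w = μ • w := by
    have := congrArg Subtype.val hw'.apply_eq_smul
    simpa using this
  have hμ0 : μ ≠ 0 := by
    rintro rfl
    rw [zero_smul] at hTw
    have hinj : Function.Injective ((T : V →ₗ[ℂ] V) ^ n) := by
      rw [Module.End.coe_pow]
      exact T.injective.iterate n
    exact hw0 (hinj (by rw [hTw, map_zero]))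
  have hn0 : n ≠ 0 := by omega
  have key : ∀ l : ℂ, l ^ n = μ → Module.End.HasEigenvalue (T : V →ₗ[ℂ] V) l := by
    intro l hl
    have hl0 : l ≠ 0 := by
      rintro rfl
      exact hμ0 (by rw [← hl, zero_pow hn0])
    let f : ℕ → V := fun k => (l⁻¹) ^ k • ((T : V →ₗ[ℂ] V) ^ k) w
    have hf0 : f 0 = w := by simp [f]
    have hfn : f n = w := by
      simp only [f]
      rw [hTw, smul_smul, ← hl, ← mul_pow, inv_mul_cancel₀ hl0, one_pow, one_smul]
    have hTf : ∀ k, (T : V →ₗ[ℂ] V) (f k) = l • f (k + 1) := by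
      intro k
      simp only [f]
      rw [map_smul, smul_smul, pow_succ' l⁻¹, ← mul_assoc, mul_inv_cancel₀ hl0, one_mul,
        pow_succ' (T : V →ₗ[ℂ] V)]
      rfl
    have hshift : ∑ k ∈ Finset.range n, f (k + 1) = ∑ k ∈ Finset.range n, f k := by
      have h1 := Finset.sum_range_succ f n
      have h2 := Finset.sum_range_succ' f n
      rw [h1, hfn, hf0] at h2
      exact (add_right_cancel h2).symm
    refine Module.End.hasEigenvalue_of_hasEigenvector
      (x := ∑ k ∈ Finset.range n, f k) ⟨?_, ?_⟩
    · rw [Module.End.mem_eigenspace_iff, map_sum, Finset.sum_congr rfl (fun k _ => hTf k),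
        ← Finset.smul_sum, hshift]
    · intro hz
      obtain ⟨m, rfl⟩ := Nat.exists_eq_succ_of_ne_zero hn0
      rw [Finset.sum_range_succ', hf0] at hz
      have hin : ∑ k ∈ Finset.range m, f (k + 1) ∈ ⨆ j, ⨆ (_ : j ≠ 0), W j := by
        refine Submodule.sum_mem _ fun k hk => ?_
        have hk' := Finset.mem_range.mp hk
        have hne : Fin.ofNat (m + 1) (k + 1) ≠ 0 := by
          intro h
          have := congrArg Fin.val h
          simp only [Fin.val_ofNat, Fin.val_zero] at this
          rw [Nat.mod_eq_of_lt (by omega)] at this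
          omega
        exact (le_iSup₂_of_le (f := fun j (_ : j ≠ 0) => W j) _ hne le_rfl)
          (Submodule.smul_mem _ _ (hmem w hw (k + 1)))
      have hw2 : w ∈ ⨆ j, ⨆ (_ : j ≠ 0), W j := by
        rw [eq_neg_of_add_eq_zero_right hz]
        exact Submodule.neg_mem _ hin
      exact hw0 (Submodule.disjoint_def.mp (hindep 0) w hw hw2)
  obtain ⟨l, hl⟩ := IsAlgClosed.exists_pow_nat_eq μ (Nat.pos_of_ne_zero hn0)
  have hl0 : l ≠ 0 := by
    rintro rfl
    exact hμ0 (by rw [← hl, zero_pow hn0])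
  have hζ := Complex.isPrimitiveRoot_exp n hn0
  set ζ := Complex.exp (2 * Real.pi * Complex.I / n)
  have hk : ∀ j : ℕ, (l * ζ ^ j) ^ n = μ := by
    intro j
    rw [mul_pow, ← pow_mul, mul_comm j, pow_mul, hζ.pow_eq_one, one_pow, mul_one, hl]
  have hd : ∀ i j : ℕ, i < n → j < n → i ≠ j → l * ζ ^ i ≠ l * ζ ^ j := by
    intro i j hi hj hij h
    exact hij (hζ.pow_inj hi hj (mul_left_cancel₀ hl0 h))
  exact ⟨l * ζ ^ 0, l * ζ ^ 1, l * ζ ^ 2, hd _ _ (by omega) (by omega) (by omega),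
    hd _ _ (by omega) (by omega) (by omega), hd _ _ (by omega) (by omega) (by omega),
    key _ (hk 0), key _ (hk 1), key _ (hk 2)⟩
end

section
/- Let $K$ be a closed subgroup of the product topological group $SU(5) \times SU(8)$ such that both coordinate projections $K \to SU(5)$ and $K \to SU(8)$ are surjective. Then $K = SU(5) \times SU(8)$. -/
/-- The special unitary group `SU(n)`, as a subgroup of the unitary group of
`n × n` complex matrices (which carries the topology induced from matrices). -/
def SU (n : ℕ) : Subgroup (Matrix.unitaryGroup (Fin n) ℂ) where
  carrier := {A | (A : Matrix (Fin n) (Fin n) ℂ).det = 1}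
  one_mem' := by simp
  mul_mem' := by
    intro A B hA hB
    show ((A * B : Matrix.unitaryGroup (Fin n) ℂ) : Matrix (Fin n) (Fin n) ℂ).det = 1
    rw [Matrix.UnitaryGroup.mul_val, Matrix.det_mul, hA, hB, mul_one]
  inv_mem' := by
    intro A hA
    show ((A⁻¹ : Matrix.unitaryGroup (Fin n) ℂ) : Matrix (Fin n) (Fin n) ℂ).det = 1
    rw [Matrix.UnitaryGroup.inv_val, Matrix.star_eq_conjTranspose, Matrix.det_conjTranspose,
      show ((A : Matrix (Fin n) (Fin n) ℂ)).det = 1 from hA]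
    exact star_one ℂ

open Matrix in
theorem aux_cayley {ι : Type*} [Fintype ι] [DecidableEq ι] (W : Matrix ι ι ℂ)
    (hW : star W * W = 1) (hu : IsUnit (1 + W)) :
    ∃ V ∈ Matrix.unitaryGroup ι ℂ, ∃ d : ι → ℂ, W = V * diagonal d * star V := by
  have hW' : W * star W = 1 := mul_eq_one_comm.mp hW
  obtain ⟨u, hu⟩ := hu
  set Z : Matrix ι ι ℂ := ↑u⁻¹ with hZ
  have z1 : (1 + W) * Z = 1 := by rw [← hu]; simp [Z]
  have z2 : Z * (1 + W) = 1 := by rw [← hu]; simp [Z]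
  have z3 : star Z * (1 + star W) = 1 := by
    have := congrArg star z1; simpa using this
  set H : Matrix ι ι ℂ := Complex.I • ((1 - W) * Z) with hHdef
  have hH : H.IsHermitian := by
    have key : -(star Z * (1 - star W)) = (1 - W) * Z := by
      calc -(star Z * (1 - star W)) = -(star Z * (1 - star W) * ((1 + W) * Z)) := by rw [z1, mul_one]
        _ = star Z * (-((1 - star W) * (1 + W))) * Z := by noncomm_ring
        _ = star Z * ((1 + star W) * (1 - W)) * Z := by
            congr 2
            simp only [sub_mul, mul_add, add_mul, mul_sub, hW]
            simp
            abel
        _ = (star Z * (1 + star W)) * ((1 - W) * Z) := by noncomm_ring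
        _ = _ := by rw [z3, one_mul]
    show star H = H
    rw [hHdef, star_smul, star_mul, star_sub, star_one, ← key]
    simp
  have e1 : W * (1 - Complex.I • H) = 1 + Complex.I • H := by
    have h2 : Complex.I • H = - ((1 - W) * Z) := by
      rw [hHdef, smul_smul, Complex.I_mul_I, neg_one_smul]
    rw [h2]
    have : W * (1 - -((1 - W) * Z)) - (1 + -((1 - W) * Z)) = (1+W) * (1 - W) * Z - (1 - W) := by
      noncomm_ring
    have h3 : (1+W) * (1 - W) * Z = (1 - W) := by
      rw [show (1+W) * (1 - W) = (1 - W) * (1+W) by noncomm_ring, mul_assoc, z1, mul_one]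
    rw [h3, sub_self] at this
    exact sub_eq_zero.mp this
  obtain ⟨V, hV, D, hD⟩ : ∃ V ∈ Matrix.unitaryGroup ι ℂ, ∃ D : ι → ℝ,
      H = V * diagonal (fun i => (D i : ℂ)) * star V := by
    refine ⟨hH.eigenvectorUnitary, hH.eigenvectorUnitary.2, hH.eigenvalues, ?_⟩
    have := hH.spectral_theorem
    rw [Unitary.conjStarAlgAut_apply] at this
    exact this
  have v1 := (Matrix.mem_unitaryGroup_iff).1 hV
  have v2 := (Matrix.mem_unitaryGroup_iff').1 hV
  have nz : ∀ i, (1 - Complex.I * (D i : ℂ)) ≠ 0 := by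
    intro i h
    have := congrArg Complex.re h
    simp at this
  refine ⟨V, hV, fun i => (1 + Complex.I * D i) * (1 - Complex.I * D i)⁻¹, ?_⟩
  have a1 : 1 - Complex.I • H = V * diagonal (fun i => 1 - Complex.I * (D i : ℂ)) * star V := by
    have : diagonal (fun i => 1 - Complex.I * (D i : ℂ)) = 1 - Complex.I • diagonal (fun i => (D i : ℂ)) := by
      rw [← diagonal_one, ← diagonal_smul, diagonal_sub]; rfl
    rw [this, mul_sub, sub_mul, mul_one, v1, hD]; simp
  have a2 : 1 + Complex.I • H = V * diagonal (fun i => 1 + Complex.I * (D i : ℂ)) * star V := by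
    have : diagonal (fun i => 1 + Complex.I * (D i : ℂ)) = 1 + Complex.I • diagonal (fun i => (D i : ℂ)) := by
      rw [← diagonal_one, ← diagonal_smul, diagonal_add]; rfl
    rw [this, mul_add, add_mul, mul_one, v1, hD]; simp
  set Y := V * diagonal (fun i => (1 - Complex.I * (D i : ℂ))⁻¹) * star V with hY
  have a3 : (1 - Complex.I • H) * Y = 1 := by
    rw [a1, hY]
    calc _ = V * diagonal (fun i => 1 - Complex.I * (D i : ℂ)) * (star V * V) * diagonal (fun i => (1 - Complex.I * (D i : ℂ))⁻¹) * star V := by noncomm_ring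
      _ = V * (diagonal (fun i => 1 - Complex.I * (D i : ℂ)) * diagonal (fun i => (1 - Complex.I * (D i : ℂ))⁻¹)) * star V := by rw [v2, mul_one]; noncomm_ring
      _ = 1 := by
        rw [diagonal_mul_diagonal]
        simp [nz, v1]
  calc W = W * (1 - Complex.I • H) * Y := by rw [mul_assoc, a3, mul_one]
    _ = (1 + Complex.I • H) * Y := by rw [e1]
    _ = V * diagonal (fun i => 1 + Complex.I * (D i : ℂ)) * (star V * V) * diagonal (fun i => (1 - Complex.I * (D i : ℂ))⁻¹) * star V := by
        rw [a2, hY]; noncomm_ring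
    _ = V * (diagonal (fun i => 1 + Complex.I * (D i : ℂ)) * diagonal (fun i => (1 - Complex.I * (D i : ℂ))⁻¹)) * star V := by rw [v2, mul_one]; noncomm_ring
    _ = _ := by rw [diagonal_mul_diagonal]

open Matrix in
theorem aux_unitary_diag {ι : Type*} [Fintype ι] [DecidableEq ι] (U : Matrix ι ι ℂ)
    (hU : U ∈ Matrix.unitaryGroup ι ℂ) :
    ∃ V ∈ Matrix.unitaryGroup ι ℂ, ∃ d : ι → ℂ, (∀ i, star (d i) * d i = 1) ∧
      U = V * diagonal d * star V := by
  suffices h : ∃ V ∈ Matrix.unitaryGroup ι ℂ, ∃ d : ι → ℂ, U = V * diagonal d * star V by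
    obtain ⟨V, hV, d, h⟩ := h
    refine ⟨V, hV, d, ?_, h⟩
    have v1 := (Matrix.mem_unitaryGroup_iff).1 hV
    have v2 := (Matrix.mem_unitaryGroup_iff').1 hV
    have u2 := (Matrix.mem_unitaryGroup_iff').1 hU
    have e : diagonal d = star V * U * V := by
      rw [h]
      calc diagonal d = (star V * V) * diagonal d * (star V * V) := by rw [v2]; simp
        _ = _ := by noncomm_ring
    have e2 : star (diagonal d) * diagonal d = 1 := by
      rw [e]; simp only [star_mul, star_star]
      calc _ = star V * (star U * ((V * star V) * U)) * V := by noncomm_ring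
        _ = _ := by rw [v1, one_mul, u2, mul_one, v2]
    intro i
    have := congrFun (congrFun e2 i) i
    rw [star_eq_conjTranspose, diagonal_conjTranspose, diagonal_mul_diagonal] at this
    simpa using this
  have inf : (Metric.sphere (0:ℂ) 1).Infinite := by
    have hc : IsPreconnected (Metric.sphere (0:ℂ) 1) :=
      isPreconnected_sphere (by simp [Complex.rank_real_complex]) 0 1
    refine hc.infinite_of_nontrivial ⟨1, by simp, -1, by simp, ?_⟩
    norm_num
  have fin : (spectrum ℂ U).Finite := Matrix.finite_spectrum U
  obtain ⟨w, hw, hws⟩ := (inf.sdiff fin).nonempty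
  have hw1 : star w * w = 1 := by
    have : ‖w‖ = 1 := by simpa using hw
    rw [Complex.star_def, Complex.conj_mul', this]; simp
  have hwu : IsUnit (algebraMap ℂ (Matrix ι ι ℂ) w - U) := by
    by_contra h; exact hws h
  have u2 := (Matrix.mem_unitaryGroup_iff').1 hU
  have hw2 : w * star w = 1 := by rw [mul_comm, hw1]
  have hw3 : w * (starRingEnd ℂ) w = 1 := hw2
  obtain ⟨V, hV, d, h⟩ := aux_cayley (-(star w) • U) (by
    rw [star_smul, smul_mul_smul_comm, u2]; simp [hw3]) (by
    have : 1 + -(star w) • U = algebraMap ℂ (Matrix ι ι ℂ) (star w) * (algebraMap ℂ (Matrix ι ι ℂ) w - U) := by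
      rw [mul_sub, ← map_mul, hw1, map_one, ← Algebra.smul_def, neg_smul, sub_eq_add_neg]
    rw [this]
    refine IsUnit.mul ?_ hwu
    exact (IsUnit.of_mul_eq_one _ hw1).map _)
  refine ⟨V, hV, fun i => -w * d i, ?_⟩
  have : U = (-w) • (-(star w) • U) := by rw [smul_smul]; simp [hw3]
  rw [this, h, show (fun i => -w * d i) = (-w) • d from rfl, diagonal_smul]
  simp

/-- Rank-two embedding. -/
noncomputable def auxE {ι : Type*} [Fintype ι] [DecidableEq ι] (P : Matrix ι (Fin 2) ℂ)
    (A : Matrix (Fin 2) (Fin 2) ℂ) : Matrix ι ι ℂ := 1 + P * (A - 1) * P.conjTranspose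

open Matrix in
theorem auxE_mul {ι : Type*} [Fintype ι] [DecidableEq ι] (P : Matrix ι (Fin 2) ℂ)
    (hP : Pᴴ * P = 1) (A B : Matrix (Fin 2) (Fin 2) ℂ) :
    auxE P A * auxE P B = auxE P (A * B) := by
  unfold auxE
  have h : P * (A - 1) * Pᴴ * (P * (B - 1) * Pᴴ) = P * ((A - 1) * (B - 1)) * Pᴴ := by
    calc _ = P * ((A - 1) * (Pᴴ * P) * (B - 1)) * Pᴴ := by simp only [Matrix.mul_assoc]
      _ = _ := by rw [hP, Matrix.mul_one]
  rw [mul_add, add_mul, add_mul, h]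
  have h2 : A * B - 1 = (A - 1) + (B - 1) + (A - 1) * (B - 1) := by noncomm_ring
  rw [h2, Matrix.mul_add, Matrix.mul_add, Matrix.add_mul, Matrix.add_mul]
  simp only [mul_one, one_mul]
  abel

open Matrix in
theorem auxE_star {ι : Type*} [Fintype ι] [DecidableEq ι] (P : Matrix ι (Fin 2) ℂ)
    (A : Matrix (Fin 2) (Fin 2) ℂ) :
    star (auxE P A) = auxE P (star A) := by
  simp [auxE, star_eq_conjTranspose, Matrix.mul_assoc]

open Matrix in
theorem auxE_one {ι : Type*} [Fintype ι] [DecidableEq ι] (P : Matrix ι (Fin 2) ℂ) :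
    auxE P 1 = 1 := by
  simp [auxE]

open Matrix in
theorem auxE_unitary {ι : Type*} [Fintype ι] [DecidableEq ι] (P : Matrix ι (Fin 2) ℂ)
    (hP : Pᴴ * P = 1) (A : Matrix (Fin 2) (Fin 2) ℂ) (hA : A ∈ unitaryGroup (Fin 2) ℂ) :
    auxE P A ∈ unitaryGroup ι ℂ := by
  rw [mem_unitaryGroup_iff] at *
  rw [auxE_star, auxE_mul P hP, hA, auxE_one]

/-- closure conditions -/
structure AuxN {ι : Type*} [Fintype ι] [DecidableEq ι] (S : Set (Matrix ι ι ℂ)) : Prop where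
  one : 1 ∈ S
  mul : ∀ A ∈ S, ∀ B ∈ S, A * B ∈ S
  inv : ∀ A ∈ S, star A ∈ S
  conj : ∀ A ∈ S, ∀ V ∈ Matrix.unitaryGroup ι ℂ, V * A * star V ∈ S

open Matrix in
theorem auxE_preimage {ι : Type*} [Fintype ι] [DecidableEq ι] (P : Matrix ι (Fin 2) ℂ)
    (hP : Pᴴ * P = 1) (S : Set (Matrix ι ι ℂ)) (hS : AuxN S) : AuxN {A | auxE P A ∈ S} where
  one := by simpa [auxE_one] using hS.one
  mul A hA B hB := by
    simp only [Set.mem_ofPred_eq] at *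
    rw [← auxE_mul P hP]; exact hS.mul _ hA _ hB
  inv A hA := by
    simp only [Set.mem_ofPred_eq] at *
    rw [← auxE_star P]; exact hS.inv _ hA
  conj A hA V hV := by
    simp only [Set.mem_ofPred_eq] at *
    rw [← auxE_mul P hP, ← auxE_mul P hP, ← auxE_star]
    exact hS.conj _ hA _ (auxE_unitary P hP V hV)

open Matrix in
/-- In the rank-two group: commutators with `k = diag(a,b)`, `a ≠ b`, generate the torus. -/
theorem aux_two (S : Set (Matrix (Fin 2) (Fin 2) ℂ)) (hS : AuxN S) (a b : ℂ)
    (ha : star a * a = 1) (hb : star b * b = 1) (hab : a ≠ b)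
    (hk : ∀ A ∈ unitaryGroup (Fin 2) ℂ,
      diagonal ![a, b] * A * star (diagonal ![a, b]) * star A ∈ S)
    (θ : ℝ) : diagonal ![Complex.exp (θ * Complex.I), Complex.exp (-(θ * Complex.I))] ∈ S := by
  set r : ℝ := (a * star b).re with hr
  have hr1 : r < 1 := by
    have h1 : 0 < Complex.normSq (a - b) := Complex.normSq_pos.2 (sub_ne_zero.2 hab)
    have h2 : a.re * a.re + a.im * a.im = 1 := by
      have := congrArg Complex.re ha; simpa using this
    have h3 : b.re * b.re + b.im * b.im = 1 := by
      have := congrArg Complex.re hb; simpa using this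
    rw [Complex.normSq_apply] at h1
    simp at h1 hr
    nlinarith
  have small : ∀ t : ℝ, r ≤ Real.cos t →
      diagonal ![Complex.exp (t * Complex.I), Complex.exp (-(t * Complex.I))] ∈ S := by
    intro t ht
    have hc1 := Real.cos_le_one t
    set q : ℝ := (1 - Real.cos t) / (1 - r) with hq
    have q0 : 0 ≤ q := div_nonneg (by linarith) (by linarith)
    have q1 : q ≤ 1 := by rw [hq, div_le_one (by linarith)]; linarith
    have hqr : q * (1 - r) = 1 - Real.cos t := by rw [hq]; field_simp [show (1 - r) ≠ 0 by linarith]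
    set s := Real.sqrt q
    set c := Real.sqrt (1 - q)
    have hs : s * s = q := Real.mul_self_sqrt q0
    have hc : c * c = 1 - q := Real.mul_self_sqrt (by linarith)
    have hsC : (s : ℂ) * s = q := by exact_mod_cast hs
    have hcC : (c : ℂ) * c = 1 - q := by exact_mod_cast hc
    set A : Matrix (Fin 2) (Fin 2) ℂ := !![(c:ℂ), -(s:ℂ); (s:ℂ), (c:ℂ)] with hA
    have hAs : star A = !![(c:ℂ), (s:ℂ); -(s:ℂ), (c:ℂ)] := by
      ext i j; fin_cases i <;> fin_cases j <;> simp [A]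
    have hAu : A ∈ unitaryGroup (Fin 2) ℂ := by
      rw [mem_unitaryGroup_iff, hAs, hA]
      ext i j; fin_cases i <;> fin_cases j <;> simp [Matrix.mul_apply, Fin.sum_univ_two] <;> first | linear_combination hsC + hcC | ring
    have hks : star (diagonal ![a, b]) = diagonal ![star a, star b] := by
      ext i j; fin_cases i <;> fin_cases j <;> simp
    have ku : diagonal ![a, b] ∈ unitaryGroup (Fin 2) ℂ := by
      rw [mem_unitaryGroup_iff', hks]
      ext i j; fin_cases i <;> fin_cases j <;> simp [Matrix.mul_apply, Fin.sum_univ_two]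
      · exact ha
      · exact hb
    set M := diagonal ![a, b] * A * star (diagonal ![a, b]) * star A with hM
    have hMS : M ∈ S := hk A hAu
    have hMu : M ∈ unitaryGroup (Fin 2) ℂ :=
      mul_mem (mul_mem (mul_mem ku hAu) (Unitary.star_mem ku)) (Unitary.star_mem hAu)
    have d1 : det (diagonal ![a, b]) * det (star (diagonal ![a, b])) = 1 := by
      rw [← det_mul, mem_unitaryGroup_iff.1 ku, det_one]
    have d2 : det A * det (star A) = 1 := by
      rw [← det_mul, mem_unitaryGroup_iff.1 hAu, det_one]
    have hMdet : M.det = 1 := by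
      rw [hM, det_mul, det_mul, det_mul]
      linear_combination det A * det (star A) * d1 + d2
    have hre : a * star b + b * star a = 2 * r := by
      apply Complex.ext
      · simp [hr]; ring
      · simp; ring
    have hMtr : M.trace = 2 * Real.cos t := by
      rw [hM, hks, hAs, hA, trace_fin_two]
      simp [Matrix.mul_apply, Fin.sum_univ_two]
      have hqrC : (q : ℂ) * (1 - r) = 1 - Complex.cos t := by exact_mod_cast hqr
      simp only [Complex.star_def] at ha hb hre
      linear_combination (c:ℂ) * c * (ha + hb) + s * s * hre + 2 * hcC + 2 * r * hsC - 2 * hqrC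
    obtain ⟨V, hV, d, hd, hMV⟩ := aux_unitary_diag M hMu
    have v1 := mem_unitaryGroup_iff.1 hV
    have v2 := mem_unitaryGroup_iff'.1 hV
    have hdS : diagonal d ∈ S := by
      have := hS.conj M hMS (star V) (Unitary.star_mem hV)
      rw [hMV, star_star] at this
      convert this using 1
      calc diagonal d = (star V * V) * diagonal d * (star V * V) := by rw [v2]; simp
        _ = _ := by noncomm_ring
    have t1 : d 0 + d 1 = 2 * Real.cos t := by
      rw [← hMtr, hMV, trace_mul_comm, ← mul_assoc, v2, one_mul, trace_fin_two]; simp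
    have t2 : d 0 * d 1 = 1 := by
      rw [← hMdet, hMV, det_mul_comm, ← mul_assoc, v2, one_mul, det_diagonal, Fin.prod_univ_two]
    set z := Complex.exp (t * Complex.I)
    set z' := Complex.exp (-(t * Complex.I))
    have z1 : z * z' = 1 := by rw [← Complex.exp_add]; simp
    have z2 : z + z' = 2 * Real.cos t := by
      rw [Complex.ofReal_cos, Complex.two_cos]; simp [z, z']
    have hz : (d 0 - z) * (d 0 - z') = 0 := by
      linear_combination d 0 * t1 - t2 - d 0 * z2 + z1
    have znz : z ≠ 0 := Complex.exp_ne_zero _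
    rcases mul_eq_zero.1 hz with h | h
    · have h0 : d 0 = z := sub_eq_zero.1 h
      have h1 : d 1 = z' := by linear_combination t1 - z2 - h0
      convert hdS using 1
      refine congrArg diagonal ?_
      ext i; fin_cases i <;> simp [h0, h1]
    · have h0 : d 0 = z' := sub_eq_zero.1 h
      have h1 : d 1 = z := by linear_combination t1 - z2 - h0
      have := hS.inv _ hdS
      have e0 : star (d 0) = z := by
        linear_combination (star (d 0)) * (-t2) + d 1 * hd 0 + h1
      have e1 : star (d 1) = z' := by
        linear_combination (star (d 1)) * (-t2) + d 0 * hd 1 + h0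
      convert this using 1
      rw [star_eq_conjTranspose, diagonal_conjTranspose]
      congr 1
      ext i; fin_cases i
      · exact e0.symm
      · exact e1.symm
  obtain ⟨m, hm0, hm⟩ : ∃ m : ℕ, 0 < m ∧ r ≤ Real.cos (θ / m) := by
    have h1 : Filter.Tendsto (fun m : ℕ => Real.cos (θ / m)) Filter.atTop (nhds (Real.cos 0)) :=
      (Real.continuous_cos.tendsto 0).comp (tendsto_const_div_atTop_nhds_zero_nat θ)
    rw [Real.cos_zero] at h1
    have h2 := (h1.eventually (lt_mem_nhds hr1)).and (Filter.eventually_gt_atTop 0)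
    obtain ⟨m, h, h'⟩ := h2.exists
    exact ⟨m, h', h.le⟩
  have hpow : ∀ (X : Matrix (Fin 2) (Fin 2) ℂ), X ∈ S → ∀ n : ℕ, X ^ n ∈ S := by
    intro X hX n
    induction n with
    | zero => simpa using hS.one
    | succ n ih => rw [pow_succ]; exact hS.mul _ ih _ hX
  have := hpow _ (small _ hm) m
  rw [diagonal_pow] at this
  convert this using 1
  have hmC : (m : ℂ) ≠ 0 := by exact_mod_cast hm0.ne'
  refine congrArg diagonal ?_
  ext i; fin_cases i
  · simp [← Complex.exp_nat_mul]; congr 1; field_simp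
  · simp [← Complex.exp_nat_mul]; congr 1; field_simp

open Matrix in
theorem aux_pair {ι : Type*} [Fintype ι] [DecidableEq ι] (S : Set (Matrix ι ι ℂ)) (hS : AuxN S)
    (d : ι → ℂ) (hd : ∀ i, star (d i) * d i = 1) (hdS : diagonal d ∈ S) (i j : ι)
    (hij : d i ≠ d j) (z : ℂ) (hz : star z * z = 1) :
    diagonal (fun k => if k = i then z else if k = j then star z else 1) ∈ S := by
  have hne : i ≠ j := fun h => hij (by rw [h])
  set P : Matrix ι (Fin 2) ℂ := Matrix.of (fun k l => ![if k = i then 1 else 0, if k = j then 1 else 0] l) with hPdef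
  have hP : Pᴴ * P = 1 := by
    ext a b
    fin_cases a <;> fin_cases b <;> simp [P, Matrix.mul_apply, hne, hne.symm]
  have hDu : star (diagonal d) * diagonal d = 1 := by
    rw [star_eq_conjTranspose, diagonal_conjTranspose, diagonal_mul_diagonal, ← diagonal_one]
    exact congrArg diagonal (funext hd)
  have hDu' := mul_eq_one_comm.mp hDu
  have hku : star (diagonal ![d i, d j]) * diagonal ![d i, d j] = 1 := by
    rw [star_eq_conjTranspose, diagonal_conjTranspose, diagonal_mul_diagonal, ← diagonal_one]
    refine congrArg diagonal (funext fun l => ?_)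
    fin_cases l
    · exact hd i
    · exact hd j
  have hku' := mul_eq_one_comm.mp hku
  have hDP : diagonal d * P = P * diagonal ![d i, d j] := by
    ext a b
    rw [diagonal_mul, mul_diagonal]
    fin_cases b
    · by_cases h : a = i
      · subst h; simp [P]
      · simp [P, h]
    · by_cases h : a = j
      · subst h; simp [P]
      · simp [P, h]
  have hDP' : Pᴴ * star (diagonal d) = star (diagonal ![d i, d j]) * Pᴴ := by
    have := congrArg conjTranspose hDP
    rwa [conjTranspose_mul, conjTranspose_mul] at this
  have hk : ∀ A ∈ unitaryGroup (Fin 2) ℂ,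
      diagonal ![d i, d j] * A * star (diagonal ![d i, d j]) * star A ∈ {A | auxE P A ∈ S} := by
    intro A hA
    have e : diagonal d * auxE P A * star (diagonal d)
        = auxE P (diagonal ![d i, d j] * A * star (diagonal ![d i, d j])) := by
      have : diagonal ![d i, d j] * A * star (diagonal ![d i, d j]) - 1
        = diagonal ![d i, d j] * (A - 1) * star (diagonal ![d i, d j]) := by
        rw [mul_sub, sub_mul, mul_one, hku']
      unfold auxE
      rw [this, mul_add, add_mul, mul_one, hDu']
      congr 1
      calc _ = (diagonal d * P) * (A - 1) * (Pᴴ * star (diagonal d)) := by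
            simp only [Matrix.mul_assoc]
        _ = _ := by rw [hDP, hDP']; simp only [Matrix.mul_assoc]
    show auxE P _ ∈ S
    rw [← auxE_mul P hP, ← e, ← auxE_star, mul_assoc, mul_assoc, ← mul_assoc (auxE P A)]
    exact hS.mul _ hdS _ (hS.conj _ (hS.inv _ hdS) _ (auxE_unitary P hP A hA))
  have hzn : ‖z‖ = 1 := by
    rw [Complex.star_def, Complex.conj_mul'] at hz
    have h2 : ‖z‖ ^ 2 = 1 := by exact_mod_cast hz
    nlinarith [norm_nonneg z]
  have hzexp : z = Complex.exp (z.arg * Complex.I) := by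
    have := Complex.norm_mul_exp_arg_mul_I z
    rw [hzn] at this; simpa using this.symm
  have hzexp' : star z = Complex.exp (-(z.arg * Complex.I)) := by
    rw [Complex.exp_neg, ← hzexp]
    exact eq_inv_of_mul_eq_one_left hz
  have := aux_two _ (auxE_preimage P hP S hS) (d i) (d j) (hd i) (hd j) hij hk z.arg
  rw [← hzexp, ← hzexp'] at this
  have this : auxE P (diagonal ![z, star z]) ∈ S := this
  convert this using 1
  ext a b
  simp only [auxE, Matrix.add_apply, Matrix.mul_apply, Fin.sum_univ_two, P, conjTranspose_apply,
    Matrix.sub_apply, Matrix.of_apply]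
  by_cases hab : a = b
  · subst hab
    by_cases h1 : a = i
    · subst h1; simp [hne]
    · by_cases h2 : a = j
      · subst h2; simp [h1]
      · simp [h1, h2]
  · by_cases h1 : a = i
    · subst h1; simp [hne, hab, Ne.symm hab]
    · by_cases h2 : a = j
      · subst h2; simp [h1, hab, Ne.symm hab]
      · simp [h1, h2, hab]

open Matrix in
theorem aux_main {ι : Type*} [Fintype ι] [DecidableEq ι] (S : Set (Matrix ι ι ℂ)) (hS : AuxN S)
    (U : Matrix ι ι ℂ) (hU : U ∈ unitaryGroup ι ℂ) (hUS : U ∈ S) (hns : ¬ ∃ c : ℂ, U = c • 1)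
    (W : Matrix ι ι ℂ) (hW : W ∈ unitaryGroup ι ℂ) (hdet : W.det = 1) : W ∈ S := by
  obtain ⟨V, hV, d, hd, hUV⟩ := aux_unitary_diag U hU
  have v1 := mem_unitaryGroup_iff.1 hV
  have v2 := mem_unitaryGroup_iff'.1 hV
  have hdS : diagonal d ∈ S := by
    have := hS.conj U hUS (star V) (Unitary.star_mem hV)
    rw [hUV, star_star] at this
    convert this using 1
    calc diagonal d = (star V * V) * diagonal d * (star V * V) := by rw [v2]; simp
      _ = _ := by noncomm_ring
  obtain ⟨i, j, hij⟩ : ∃ i j, d i ≠ d j := by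
    by_contra! h
    apply hns
    by_cases hι : Nonempty ι
    · obtain ⟨i⟩ := hι
      refine ⟨d i, ?_⟩
      have : diagonal d = d i • (1 : Matrix ι ι ℂ) := by
        rw [← diagonal_one, ← diagonal_smul]
        exact congrArg diagonal (funext fun k => by simp [h k i])
      rw [hUV, this]; simp [v1]
    · refine ⟨1, ?_⟩
      ext a; exact (hι ⟨a⟩).elim
  have hne : i ≠ j := fun h => hij (by rw [h])
  have hI := aux_pair S hS d hd hdS i j hij
  have hall : ∀ k, k ≠ i → ∀ z : ℂ, star z * z = 1 →
      diagonal (fun l => if l = k then z else if l = i then star z else 1) ∈ S := by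
    intro k hk z hz
    by_cases hkj : k = j
    · subst hkj
      exact aux_pair S hS d hd hdS k i hij.symm z hz
    · refine aux_pair S hS _ ?_ (hI (-1) (by simp)) k i ?_ z hz
      · intro l
        by_cases h1 : l = i
        · simp [h1]
        · by_cases h2 : l = j <;> simp [h1, h2]
      · simp [hk, hkj]; norm_num
  obtain ⟨V', hV', e, he, hWV⟩ := aux_unitary_diag W hW
  have w2 := mem_unitaryGroup_iff'.1 hV'
  have hprod : ∏ k, e k = 1 := by
    rw [← hdet, hWV, det_mul_comm, ← mul_assoc, w2, one_mul, det_diagonal]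
  rw [hWV]
  refine hS.conj _ ?_ _ hV'
  have gen : ∀ s : Finset ι, i ∉ s →
      diagonal (fun l => if l ∈ s then e l else if l = i then star (∏ k ∈ s, e k) else 1) ∈ S := by
    intro s
    induction s using Finset.induction_on with
    | empty =>
      intro _
      convert hS.one using 1
      rw [← diagonal_one]
      exact congrArg diagonal (funext fun l => by simp)
    | insert a s has ih =>
      intro hi
      have hia : a ≠ i := fun h => hi (by simp [h])
      have his : i ∉ s := fun h => hi (by simp [h])
      have := hS.mul _ (hall a hia (e a) (he a)) _ (ih his)
      rw [diagonal_mul_diagonal] at this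
      convert this using 1
      refine congrArg diagonal (funext fun l => ?_)
      by_cases h1 : l = a
      · subst h1; simp [has, hia]
      · by_cases h2 : l = i
        · subst h2; simp [his, h1, Finset.prod_insert has]
        · simp [h1, h2]
  have := gen (Finset.univ.erase i) (by simp)
  convert this using 1
  refine congrArg diagonal (funext fun l => ?_)
  by_cases h : l = i
  · subst h
    simp only [Finset.mem_erase, ne_eq, not_true_eq_false, false_and, if_false, if_true]
    have h3 : e l * ∏ k ∈ Finset.univ.erase l, e k = 1 := by
      rw [Finset.mul_prod_erase _ _ (Finset.mem_univ l), hprod]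
    have h4 : star (e l) * star (∏ k ∈ Finset.univ.erase l, e k) = 1 := by
      rw [← star_mul', h3, star_one]
    linear_combination (-e l) * h4 + star (∏ k ∈ Finset.univ.erase l, e k) * he l
  · simp [h]

open Matrix in
theorem aux_SU (n : ℕ) (hn : n ≠ 0) (N : Subgroup (SU n)) (hN : N.Normal) (g : SU n) (hg : g ∈ N)
    (hns : ¬ ∃ c : ℂ, (g.1.1 : Matrix (Fin n) (Fin n) ℂ) = c • 1) : N = ⊤ := by
  have hS : AuxN {M : Matrix (Fin n) (Fin n) ℂ | ∃ a : SU n, a ∈ N ∧ a.1.1 = M} := by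
    refine ⟨⟨1, N.one_mem, rfl⟩, ?_, ?_, ?_⟩
    · rintro _ ⟨a, ha, rfl⟩ _ ⟨b, hb, rfl⟩
      exact ⟨a * b, N.mul_mem ha hb, rfl⟩
    · rintro _ ⟨a, ha, rfl⟩
      exact ⟨a⁻¹, N.inv_mem ha, rfl⟩
    · rintro _ ⟨a, ha, rfl⟩ V hV
      have v1 := mem_unitaryGroup_iff.1 hV
      have hdV : V.det * star V.det = 1 := by
        have := congrArg det v1
        rwa [det_mul, star_eq_conjTranspose, det_conjTranspose, det_one] at this
      obtain ⟨c, hc⟩ : ∃ c : ℂ, c ^ n = star V.det :=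
        IsAlgClosed.exists_pow_nat_eq _ (Nat.pos_of_ne_zero hn)
      have hc1 : c * star c = 1 := by
        have h1 : ‖c‖ ^ n = 1 := by
          rw [← norm_pow, hc, norm_star]
          rw [Complex.star_def, Complex.mul_conj'] at hdV
          have h2 : ‖V.det‖ ^ 2 = 1 := by exact_mod_cast hdV
          nlinarith [norm_nonneg V.det]
        have h2 : ‖c‖ = 1 := (pow_eq_one_iff_of_nonneg (norm_nonneg c) hn).1 h1
        rw [Complex.star_def, Complex.mul_conj', h2]; simp
      have hWu : c • V ∈ unitaryGroup (Fin n) ℂ := by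
        rw [mem_unitaryGroup_iff, star_smul, smul_mul_smul_comm, v1, hc1, one_smul]
      let W : SU n := ⟨⟨c • V, hWu⟩, by
        show (c • V).det = 1
        rw [det_smul, Fintype.card_fin, hc, mul_comm, hdV]⟩
      refine ⟨W * a * W⁻¹, hN.conj_mem a ha W, ?_⟩
      show (c • V) * a.1.1 * star (c • V) = _
      rw [star_smul, smul_mul_assoc, smul_mul_smul_comm, hc1, one_smul]
  rw [eq_top_iff]
  intro w _
  obtain ⟨a, ha, hw⟩ := aux_main _ hS g.1.1 g.1.2 ⟨g, hg, rfl⟩ hns w.1.1 w.1.2 w.2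
  have : a = w := Subtype.ext (Subtype.ext hw)
  rwa [← this]

open Matrix in
/-- An element of order dividing 7 in `U(5)`, conjugate to its cube, is trivial. -/
theorem aux_seven (a q : Matrix (Fin 5) (Fin 5) ℂ) (ha : a ∈ unitaryGroup (Fin 5) ℂ)
    (hq : q ∈ unitaryGroup (Fin 5) ℂ) (h7 : a ^ 7 = 1) (hqa : q * a * star q = a ^ 3) : a = 1 := by
  obtain ⟨V, hV, d, hd, h⟩ := aux_unitary_diag a ha
  have v1 := mem_unitaryGroup_iff.1 hV
  have v2 := mem_unitaryGroup_iff'.1 hV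
  have hconj : ∀ (Q X : Matrix (Fin 5) (Fin 5) ℂ), Q ∈ unitaryGroup (Fin 5) ℂ →
      spectrum ℂ (Q * X * star Q) = spectrum ℂ X := by
    intro Q X hQ
    exact Unitary.spectrum_star_right_conjugate (U := ⟨Q, hQ⟩)
  have hspec : spectrum ℂ a = Set.range d := by
    rw [h, hconj V _ hV, spectrum_diagonal]
  have h3 : ∀ x ∈ spectrum ℂ a, x ^ 3 ∈ spectrum ℂ a := by
    intro x hx
    rw [← hconj q a hq, hqa]
    exact spectrum.pow_mem_pow a 3 hx
  have hx7 : ∀ x ∈ spectrum ℂ a, x ^ 7 = 1 := by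
    intro x hx
    have := spectrum.pow_mem_pow a 7 hx
    rw [h7, spectrum.one_eq] at this
    simpa using this
  have key : ∀ x ∈ spectrum ℂ a, x = 1 := by
    intro x hx
    by_contra hx1
    have hprim : IsPrimitiveRoot x 7 := by
      have : Fact (Nat.Prime 7) := ⟨by norm_num⟩
      rw [← orderOf_eq_prime (hx7 x hx) hx1]
      exact IsPrimitiveRoot.orderOf x
    have p1 := h3 x hx
    have p2 := h3 _ p1
    have p3 := h3 _ p2
    have p4 := h3 _ p3
    have p5 := h3 _ p4
    simp only [← pow_mul] at p1 p2 p3 p4 p5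
    norm_num at p1 p2 p3 p4 p5
    have red : ∀ m k : ℕ, x ^ (7 * m + k) = x ^ k := by
      intro m k
      rw [pow_add, pow_mul, hx7 x hx, one_pow, one_mul]
    have r2 := red 1 2
    have r3 := red 3 6
    have r4 := red 11 4
    have r5 := red 34 5
    norm_num at r2 r3 r4 r5
    rw [r2] at p2
    rw [r3] at p3
    rw [r4] at p4
    rw [r5] at p5
    have hall : ∀ k : Fin 6, x ^ (k.1 + 1) ∈ Set.range d := by
      rw [← hspec]
      intro k; fin_cases k <;> simp <;> assumption
    choose f hf using hall
    have hinj : Function.Injective f := by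
      intro k l hkl
      have : x ^ (k.1 + 1) = x ^ (l.1 + 1) := by rw [← hf k, ← hf l, hkl]
      have := hprim.pow_inj (by omega) (by omega) this
      ext; omega
    have := Fintype.card_le_of_injective f hinj
    simp at this
  have hd1 : diagonal d = 1 := by
    rw [← diagonal_one]
    refine congrArg diagonal (funext fun i => ?_)
    exact key _ (by rw [hspec]; exact ⟨i, rfl⟩)
  rw [h, hd1, mul_one, v1]

open Matrix in
theorem aux_b : ∃ b p : SU 8, b ^ 7 = 1 ∧ p * b * p⁻¹ = b ^ 3 ∧
    ¬ ∃ c : ℂ, (b.1.1 : Matrix (Fin 8) (Fin 8) ℂ) = c • 1 := by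
  obtain ⟨w, hw⟩ : ∃ w : ℂ, IsPrimitiveRoot w 7 := ⟨_, Complex.isPrimitiveRoot_exp 7 (by norm_num)⟩
  have w7 : w ^ 7 = 1 := hw.pow_eq_one
  have wn : ‖w‖ = 1 := hw.norm'_eq_one (by norm_num)
  have red : ∀ m k : ℕ, w ^ (7 * m + k) = w ^ k := by
    intro m k
    rw [pow_add, pow_mul, w7, one_pow, one_mul]
  have hbu : diagonal (fun i : Fin 8 => w ^ i.1) ∈ unitaryGroup (Fin 8) ℂ := by
    rw [mem_unitaryGroup_iff, star_eq_conjTranspose, diagonal_conjTranspose, diagonal_mul_diagonal,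
      ← diagonal_one]
    refine congrArg diagonal (funext fun i => ?_)
    rw [Pi.star_apply, Complex.star_def, Complex.mul_conj', norm_pow, wn]; simp
  have hbd : (diagonal (fun i : Fin 8 => w ^ i.1)).det = 1 := by
    rw [det_diagonal, Finset.prod_pow_eq_pow_sum]
    have : ∑ i : Fin 8, i.1 = 7 * 4 + 0 := by decide
    rw [this, red, pow_zero]
  let b : SU 8 := ⟨⟨_, hbu⟩, hbd⟩
  let f : Fin 8 → Fin 8 := ![7, 3, 6, 2, 5, 1, 4, 0]
  let g : Fin 8 → Fin 8 := ![7, 5, 3, 1, 6, 4, 2, 0]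
  let σ : Equiv.Perm (Fin 8) := ⟨f, g, by decide, by decide⟩
  have hσ : Equiv.Perm.sign σ = 1 := by decide
  let Q : Matrix (Fin 8) (Fin 8) ℂ := σ.permMatrix ℂ
  have hQd : Q.det = 1 := by simp [Q, hσ]
  have hQs : star Q = (σ⁻¹).permMatrix ℂ := by
    rw [star_eq_conjTranspose, conjTranspose_permMatrix]
  have hQu : Q ∈ unitaryGroup (Fin 8) ℂ := by
    rw [mem_unitaryGroup_iff, hQs, ← permMatrix_mul]; simp
  let p : SU 8 := ⟨⟨Q, hQu⟩, hQd⟩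
  refine ⟨b, p, ?_, ?_, ?_⟩
  · apply Subtype.ext; apply Subtype.ext
    show (diagonal (fun i : Fin 8 => w ^ i.1)) ^ 7 = 1
    rw [diagonal_pow, ← diagonal_one]
    refine congrArg diagonal (funext fun i => ?_)
    rw [Pi.pow_apply, ← pow_mul, mul_comm, pow_mul, w7, one_pow]
  · rw [mul_inv_eq_iff_eq_mul]
    apply Subtype.ext; apply Subtype.ext
    show Q * (diagonal (fun i : Fin 8 => w ^ i.1)) = (diagonal (fun i : Fin 8 => w ^ i.1)) ^ 3 * Q
    rw [diagonal_pow]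
    ext i j
    rw [mul_diagonal, diagonal_mul, Pi.pow_apply, ← pow_mul]
    by_cases hj : σ i = j
    · subst hj
      have : w ^ (σ i).1 = w ^ (i.1 * 3) := by
        have r1 := red 1 2
        have r2 := red 0 6
        have r3 := red 1 5
        have r4 := red 2 1
        have r5 := red 2 4
        have r6 := red 3 0
        have r7 := red 1 0
        have r8 := red 0 3
        norm_num at r1 r3 r4 r5 r6
        fin_cases i <;> simp [σ, f, r1, r3, r4, r5, r6, w7]
      rw [this, mul_comm]
    · simp [Q, Equiv.Perm.permMatrix, PEquiv.toMatrix_apply, hj]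
  · rintro ⟨c, hc⟩
    have hc : diagonal (fun i : Fin 8 => w ^ i.1) = c • 1 := hc
    have h0 := congrFun (congrFun hc 0) 0
    have h1 := congrFun (congrFun hc 1) 1
    simp at h0 h1
    exact hw.ne_one (by norm_num) (h1.trans h0.symm)

/-- A closed subgroup of `SU(5) × SU(8)` surjecting onto both factors is the whole
group. -/
theorem stmt_4 (K : Subgroup (↥(SU 5) × ↥(SU 8)))
    (hclosed : IsClosed (K : Set (↥(SU 5) × ↥(SU 8))))
    (hsurj1 : K.map (MonoidHom.fst ↥(SU 5) ↥(SU 8)) = ⊤)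
    (hsurj2 : K.map (MonoidHom.snd ↥(SU 5) ↥(SU 8)) = ⊤) :
    K = ⊤ := by
  have s1 : ∀ x : SU 5, ∃ y : SU 8, (x, y) ∈ K := by
    intro x
    have : x ∈ K.map (MonoidHom.fst ↥(SU 5) ↥(SU 8)) := by rw [hsurj1]; trivial
    obtain ⟨⟨x', y⟩, h, rfl⟩ := this
    exact ⟨y, h⟩
  have s2 : ∀ y : SU 8, ∃ x : SU 5, (x, y) ∈ K := by
    intro y
    have : y ∈ K.map (MonoidHom.snd ↥(SU 5) ↥(SU 8)) := by rw [hsurj2]; trivial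
    obtain ⟨⟨x, y'⟩, h, rfl⟩ := this
    exact ⟨x, h⟩
  let N1 : Subgroup (SU 5) := K.comap (MonoidHom.inl _ _)
  let N2 : Subgroup (SU 8) := K.comap (MonoidHom.inr _ _)
  have m1 : ∀ x, x ∈ N1 ↔ (x, (1 : SU 8)) ∈ K := fun x => Iff.rfl
  have m2 : ∀ y, y ∈ N2 ↔ ((1 : SU 5), y) ∈ K := fun y => Iff.rfl
  have n1 : N1.Normal := by
    constructor
    intro x hx g
    obtain ⟨y, hy⟩ := s1 g
    rw [m1] at *
    have := K.mul_mem (K.mul_mem hy hx) (K.inv_mem hy)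
    simpa using this
  have n2 : N2.Normal := by
    constructor
    intro x hx g
    obtain ⟨y, hy⟩ := s2 g
    rw [m2] at *
    have := K.mul_mem (K.mul_mem hy hx) (K.inv_mem hy)
    simpa using this
  have t1 : N1 = ⊤ → K = ⊤ := by
    intro h
    rw [eq_top_iff]
    rintro ⟨x, y⟩ -
    obtain ⟨x', hx'⟩ := s2 y
    have h1 : x * x'⁻¹ ∈ N1 := by rw [h]; trivial
    rw [m1] at h1
    have := K.mul_mem h1 hx'
    simpa using this
  have t2 : N2 = ⊤ → K = ⊤ := by
    intro h
    rw [eq_top_iff]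
    rintro ⟨x, y⟩ -
    obtain ⟨y', hy'⟩ := s1 x
    have h1 : y * y'⁻¹ ∈ N2 := by rw [h]; trivial
    rw [m2] at h1
    have := K.mul_mem h1 hy'
    simpa using this
  by_cases hc : ∀ x ∈ N1, ∃ c : ℂ, (x.1.1 : Matrix (Fin 5) (Fin 5) ℂ) = c • 1
  swap
  · push Not at hc
    obtain ⟨x, hx, hx'⟩ := hc
    exact t1 (aux_SU 5 (by norm_num) N1 n1 x hx (by push Not; exact hx'))
  -- elements of `N1` are central, of exponent 5
  have cen : ∀ x ∈ N1, (∀ y : SU 5, x * y = y * x) ∧ x ^ 5 = 1 := by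
    intro x hx
    obtain ⟨c, hcx⟩ := hc x hx
    constructor
    · intro y
      apply Subtype.ext; apply Subtype.ext
      show x.1.1 * y.1.1 = y.1.1 * x.1.1
      rw [hcx]; simp
    · have hdet : x.1.1.det = 1 := x.2
      rw [hcx, Matrix.det_smul, Matrix.det_one, Fintype.card_fin, mul_one] at hdet
      apply Subtype.ext; apply Subtype.ext
      show x.1.1 ^ 5 = 1
      rw [hcx, smul_pow, hdet, one_pow, one_smul]
  obtain ⟨b, p, b7, hpb, hb⟩ := aux_b
  obtain ⟨a, hab⟩ := s2 b
  obtain ⟨q, hqp⟩ := s2 p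
  have ha7 : a ^ 7 ∈ N1 := by
    rw [m1]
    have := K.pow_mem hab 7
    rw [Prod.pow_mk, b7] at this
    exact this
  set a' := a ^ 15 with ha'
  have ha'b : (a', b) ∈ K := by
    have := K.pow_mem hab 15
    rw [Prod.pow_mk, show b ^ 15 = b ^ 7 * b ^ 7 * b by group, b7, one_mul, one_mul] at this
    exact this
  have ha'7 : a' ^ 7 = 1 := by
    rw [ha', ← pow_mul, show 15 * 7 = 7 * (5 * 3) by norm_num, pow_mul, pow_mul, (cen _ ha7).2, one_pow]
  set z := q * a' * q⁻¹ * (a' ^ 3)⁻¹ with hz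
  have hzN : z ∈ N1 := by
    rw [m1]
    have := K.mul_mem (K.mul_mem (K.mul_mem hqp ha'b) (K.inv_mem hqp)) (K.inv_mem (K.pow_mem ha'b 3))
    simpa [hpb] using this
  have hzz : q * a' * q⁻¹ = z * a' ^ 3 := by rw [hz]; group
  have hz7 : z ^ 7 = 1 := by
    have h1 : (q * a' * q⁻¹) ^ 7 = 1 := by rw [conj_pow, ha'7]; group
    have hcomm : Commute z (a' ^ 3) := (cen z hzN).1 _
    rw [hzz, hcomm.mul_pow, ← pow_mul, mul_comm 3 7, pow_mul, ha'7, one_pow, mul_one] at h1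
    exact h1
  have hz1 : z = 1 := by
    have h5 := (cen z hzN).2
    calc z = z ^ 5 * z ^ 5 * z ^ 5 * (z ^ 7)⁻¹ * (z ^ 7)⁻¹ := by group
      _ = 1 := by rw [h5, hz7]; group
  rw [hz1, one_mul] at hzz
  have a1 : a' = 1 := by
    apply Subtype.ext; apply Subtype.ext
    exact aux_seven a'.1.1 q.1.1 a'.1.2 q.1.2 (congrArg (fun t : SU 5 => t.1.1) ha'7)
      (congrArg (fun t : SU 5 => t.1.1) hzz)
  rw [a1] at ha'b
  exact t2 (aux_SU 8 (by norm_num) N2 n2 b ha'b hb)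
end

section
/- Let $n \geq 2$ and let $N$ be a normal subgroup of the special unitary group $SU(n)$ over $\mathbb{C}$. Then either $N$ is contained in the center of $SU(n)$ or $N = SU(n)$. -/
section
open Matrix

theorem su_spec0 {n : ℕ} (A : Matrix (Fin n) (Fin n) ℂ) (hA : A * star A = star A * A) :
    ∃ (U : Matrix.unitaryGroup (Fin n) ℂ) (d : Fin n → ℂ),
      A * (U : Matrix (Fin n) (Fin n) ℂ) = U * diagonal d := by
  classical
  set B : Matrix (Fin n) (Fin n) ℂ := A + star A with hB
  set C : Matrix (Fin n) (Fin n) ℂ := Complex.I • (A - star A) with hC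
  have hBh : B.IsHermitian := by
    rw [Matrix.IsHermitian, ← star_eq_conjTranspose, hB]; simp [add_comm]
  have hCh : C.IsHermitian := by
    rw [Matrix.IsHermitian, ← star_eq_conjTranspose, hC, star_smul]; simp [smul_sub]; abel
  have hcomm : B * C = C * B := by
    simp only [hB, hC, mul_smul_comm, smul_mul_assoc, mul_sub, add_mul, sub_mul, mul_add]
    simp only [smul_add, smul_sub, hA]; abel
  have hA2 : A = (1/2 : ℂ) • (B - Complex.I • C) := by
    rw [hB, hC, smul_smul, Complex.I_mul_I]
    ext i j; simp; ring
  have sB := isSymmetric_toEuclideanLin_iff.mpr hBh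
  have sC := isSymmetric_toEuclideanLin_iff.mpr hCh
  have hc : Commute (toLpLin 2 2 B) (toLpLin 2 2 C) := by
    rw [commute_iff_eq, Module.End.mul_eq_comp, Module.End.mul_eq_comp, ← Matrix.toLpLin_mul_same, ← Matrix.toLpLin_mul_same, hcomm]
  have hI := LinearMap.IsSymmetric.directSum_isInternal_of_commute sB sC hc
  have hO := LinearMap.IsSymmetric.orthogonalFamily_eigenspace_inf_eigenspace sB sC
  have hI' := (DirectSum.isInternal_ne_bot_iff).mpr hI
  have hfin := WellFoundedGT.finite_ne_bot_of_iSupIndep hI.submodule_iSupIndep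
  have : Fintype {i : ℂ × ℂ // (Module.End.eigenspace (toLpLin 2 2 B) i.2 ⊓ Module.End.eigenspace (toLpLin 2 2 C) i.1) ≠ ⊥} := hfin.fintype
  have hO' := hO.comp (Subtype.val_injective (p := fun i : ℂ × ℂ => (Module.End.eigenspace (toLpLin 2 2 B) i.2 ⊓ Module.End.eigenspace (toLpLin 2 2 C) i.1) ≠ ⊥))
  have hn : Module.finrank ℂ (EuclideanSpace ℂ (Fin n)) = n := by simp
  let b := hI'.subordinateOrthonormalBasis hn hO'
  have hb := hI'.subordinateOrthonormalBasis_subordinate hn (hV' := hO')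
  have hb2 : ∀ k, ∃ μ : ℂ, A *ᵥ (b k).ofLp = μ • (b k).ofLp := by
    intro k
    have h := hb k
    set i := hI'.subordinateOrthonormalBasisIndex hn k hO'
    obtain ⟨h1, h2⟩ := Submodule.mem_inf.mp h
    rw [Module.End.mem_eigenspace_iff] at h1 h2
    have h1' := congrArg WithLp.ofLp h1
    have h2' := congrArg WithLp.ofLp h2
    simp only [toLpLin_apply, WithLp.ofLp_smul] at h1' h2'
    refine ⟨(1/2) * (i.1.2 - Complex.I * i.1.1), ?_⟩
    rw [hA2, smul_mulVec, sub_mulVec, smul_mulVec, h1', h2', mul_smul, sub_smul, mul_smul]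
  choose d hd using hb2
  refine ⟨⟨(EuclideanSpace.basisFun (Fin n) ℂ).toBasis.toMatrix b.toBasis,
    (EuclideanSpace.basisFun (Fin n) ℂ).toMatrix_orthonormalBasis_mem_unitary b⟩, d, ?_⟩
  ext i k
  have := congrFun (hd k) i
  rw [mul_diagonal]
  simp only [mulVec, dotProduct, Pi.smul_apply, smul_eq_mul] at this
  simp only [mul_apply]
  rw [mul_comm _ (d k)]
  exact this

/-- diagonal torus -/
def suT (n : ℕ) : (Fin n → Circle) →* Matrix.unitaryGroup (Fin n) ℂ where
  toFun d := ⟨diagonal (fun i => (d i : ℂ)), by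
    rw [mem_unitaryGroup_iff, star_eq_conjTranspose, diagonal_conjTranspose, diagonal_mul_diagonal, ← diagonal_one]
    congr 1; ext i
    simp [Complex.mul_conj]⟩
  map_one' := by ext; simp
  map_mul' d e := by ext; simp

theorem suT_val {n : ℕ} (d : Fin n → Circle) :
    (suT n d : Matrix (Fin n) (Fin n) ℂ) = diagonal (fun i => (d i : ℂ)) := rfl

theorem su_spec {n : ℕ} (A : Matrix.unitaryGroup (Fin n) ℂ) :
    ∃ (U : Matrix.unitaryGroup (Fin n) ℂ) (d : Fin n → Circle), A = U * suT n d * U⁻¹ := by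
  obtain ⟨U, d, h⟩ := su_spec0 (A : Matrix (Fin n) (Fin n) ℂ)
    ((mem_unitaryGroup_iff.mp A.2).trans (mem_unitaryGroup_iff'.mp A.2).symm)
  have h2 : ((U⁻¹ * A * U : Matrix.unitaryGroup (Fin n) ℂ) : Matrix (Fin n) (Fin n) ℂ) = diagonal d := by
    have : ((U⁻¹ * U : Matrix.unitaryGroup (Fin n) ℂ) : Matrix (Fin n) (Fin n) ℂ) = 1 := by simp
    rw [UnitaryGroup.mul_val] at this
    rw [UnitaryGroup.mul_val, UnitaryGroup.mul_val, mul_assoc, h, ← mul_assoc, this, one_mul]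
  have h3 := mem_unitaryGroup_iff.mp (U⁻¹ * A * U).2
  rw [h2, star_eq_conjTranspose, diagonal_conjTranspose, diagonal_mul_diagonal, ← diagonal_one] at h3
  have h4 : ∀ i, d i ∈ Submonoid.unitSphere ℂ := by
    intro i
    have := congrFun (diagonal_injective h3) i
    simp only [Pi.star_apply, RCLike.star_def, Complex.mul_conj] at this
    rw [Submonoid.unitSphere, ← SetLike.mem_coe]
    simp
    have h5 : Complex.normSq (d i) = 1 := by exact_mod_cast this
    rw [Complex.normSq_eq_norm_sq] at h5
    nlinarith [norm_nonneg (d i)]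
  refine ⟨U, fun i => ⟨d i, h4 i⟩, ?_⟩
  have : U⁻¹ * A * U = suT n fun i => ⟨d i, h4 i⟩ := Subtype.ext h2
  rw [← this]; group

/-- block embedding -/
def suPhi {n : ℕ} (V : Matrix (Fin n) (Fin 2) ℂ) (hV : Vᴴ * V = 1) :
    Matrix.unitaryGroup (Fin 2) ℂ →* Matrix.unitaryGroup (Fin n) ℂ where
  toFun W := ⟨1 + V * ((W : Matrix (Fin 2) (Fin 2) ℂ) - 1) * Vᴴ, by
    rw [mem_unitaryGroup_iff, star_eq_conjTranspose]
    have hW := mem_unitaryGroup_iff.mp W.2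
    rw [star_eq_conjTranspose] at hW
    set w := (W : Matrix (Fin 2) (Fin 2) ℂ)
    have e1 : (1 + V * (w - 1) * Vᴴ)ᴴ = 1 + V * (wᴴ - 1) * Vᴴ := by
      simp [conjTranspose_mul, Matrix.mul_assoc]
    have e2 : V * (w - 1) * Vᴴ * (V * (wᴴ - 1) * Vᴴ) = V * ((w - 1) * (wᴴ - 1)) * Vᴴ := by
      calc _ = V * (w - 1) * (Vᴴ * V) * (wᴴ - 1) * Vᴴ := by simp only [Matrix.mul_assoc]
        _ = _ := by rw [hV]; simp only [Matrix.mul_assoc, Matrix.mul_one]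
    have e3 : (w - 1) * (wᴴ - 1) = - (w - 1) - (wᴴ - 1) := by
      rw [sub_mul, mul_sub, hW]; simp
    rw [e1, add_mul, mul_add, mul_add, e2, e3]
    simp [Matrix.mul_sub, Matrix.sub_mul, Matrix.mul_neg, Matrix.neg_mul]; abel⟩
  map_one' := by ext; simp
  map_mul' X Y := by
    apply Subtype.ext
    show 1 + V * ((X : Matrix (Fin 2) (Fin 2) ℂ) * (Y : Matrix (Fin 2) (Fin 2) ℂ) - 1) * Vᴴ =
      (1 + V * ((X : Matrix (Fin 2) (Fin 2) ℂ) - 1) * Vᴴ) * (1 + V * ((Y : Matrix (Fin 2) (Fin 2) ℂ) - 1) * Vᴴ)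
    set w := (X : Matrix (Fin 2) (Fin 2) ℂ)
    set y := (Y : Matrix (Fin 2) (Fin 2) ℂ)
    have e2 : V * (w - 1) * Vᴴ * (V * (y - 1) * Vᴴ) = V * ((w - 1) * (y - 1)) * Vᴴ := by
      calc _ = V * (w - 1) * (Vᴴ * V) * (y - 1) * Vᴴ := by simp only [Matrix.mul_assoc]
        _ = _ := by rw [hV]; simp only [Matrix.mul_assoc, Matrix.mul_one]
    have e3 : (w - 1) * (y - 1) = (w * y - 1) - (w - 1) - (y - 1) := by
      rw [sub_mul, mul_sub]; simp
    rw [add_mul, mul_add, mul_add, e2, e3]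
    simp [Matrix.mul_sub, Matrix.sub_mul]; abel

theorem suPhi_conj {n : ℕ} (V : Matrix (Fin n) (Fin 2) ℂ) (hV : Vᴴ * V = 1)
    (g : Matrix.unitaryGroup (Fin n) ℂ) (δ W : Matrix.unitaryGroup (Fin 2) ℂ)
    (h : (g : Matrix (Fin n) (Fin n) ℂ) * V = V * (δ : Matrix (Fin 2) (Fin 2) ℂ)) :
    g * suPhi V hV W * g⁻¹ = suPhi V hV (δ * W * δ⁻¹) := by
  rw [mul_inv_eq_iff_eq_mul]
  apply Subtype.ext
  have hg := mem_unitaryGroup_iff'.mp g.2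
  have hd := mem_unitaryGroup_iff.mp δ.2
  have hd' := mem_unitaryGroup_iff'.mp δ.2
  show (g : Matrix (Fin n) (Fin n) ℂ) * (1 + V * ((W : Matrix (Fin 2) (Fin 2) ℂ) - 1) * Vᴴ) =
    (1 + V * ((δ : Matrix (Fin 2) (Fin 2) ℂ) * (W : Matrix (Fin 2) (Fin 2) ℂ) * star (δ : Matrix (Fin 2) (Fin 2) ℂ) - 1) * Vᴴ) * (g : Matrix (Fin n) (Fin n) ℂ)
  rw [star_eq_conjTranspose] at *
  set G := (g : Matrix (Fin n) (Fin n) ℂ)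
  set D := (δ : Matrix (Fin 2) (Fin 2) ℂ)
  set w := (W : Matrix (Fin 2) (Fin 2) ℂ)
  have k1 : Gᴴ * V = V * Dᴴ := by
    calc Gᴴ * V = Gᴴ * (V * D) * Dᴴ := by rw [Matrix.mul_assoc, Matrix.mul_assoc, hd, Matrix.mul_one]
      _ = (Gᴴ * G) * V * Dᴴ := by rw [← h]; simp only [Matrix.mul_assoc]
      _ = _ := by rw [hg, Matrix.one_mul]
  have k2 : Vᴴ * G = D * Vᴴ := by
    have := congrArg conjTranspose k1
    simpa [conjTranspose_mul] using this
  rw [mul_add, add_mul, mul_one, one_mul]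
  congr 1
  calc G * (V * (w - 1) * Vᴴ) = (G * V) * (w - 1) * Vᴴ := by simp only [Matrix.mul_assoc]
    _ = V * (D * (w - 1)) * Vᴴ := by rw [h]; simp only [Matrix.mul_assoc]
    _ = V * ((D * w * Dᴴ - 1) * D) * Vᴴ := by
      rw [sub_mul, Matrix.mul_assoc _ Dᴴ, hd', mul_sub]; simp
    _ = V * (D * w * Dᴴ - 1) * (D * Vᴴ) := by simp only [Matrix.mul_assoc]
    _ = _ := by rw [← k2]; simp only [Matrix.mul_assoc]

/-- two columns of the identity -/
def suV {n : ℕ} (i j : Fin n) : Matrix (Fin n) (Fin 2) ℂ :=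
  Matrix.of fun k l => if k = ![i, j] l then 1 else 0

theorem suV_ct {n : ℕ} (i j k : Fin n) (l : Fin 2) :
    (suV i j)ᴴ l k = if k = ![i, j] l then 1 else 0 := by
  rw [conjTranspose_apply, suV, of_apply]
  split_ifs <;> simp

theorem suV_iso {n : ℕ} {i j : Fin n} (h : i ≠ j) : (suV i j)ᴴ * suV i j = 1 := by
  ext a b
  rw [mul_apply]
  simp only [suV_ct]
  simp only [suV, of_apply, ite_mul, one_mul, zero_mul, Finset.sum_ite_eq', Finset.sum_ite_eq, Finset.mem_univ, if_true]
  fin_cases a <;> fin_cases b <;> simp [h, h.symm]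

theorem suV_diag {n : ℕ} (i j : Fin n) (d : Fin n → Circle) :
    (suT n d : Matrix (Fin n) (Fin n) ℂ) * suV i j =
      suV i j * (suT 2 ![d i, d j] : Matrix (Fin 2) (Fin 2) ℂ) := by
  ext a b
  rw [suT_val, suT_val, diagonal_mul, mul_diagonal]
  fin_cases b <;> simp [suV] <;> split_ifs with h <;> simp [h]

theorem suPhi_diag {n : ℕ} {i j : Fin n} (h : i ≠ j) (z w : Circle) :
    suPhi (suV i j) (suV_iso h) (suT 2 ![z, w]) =
      suT n (Pi.mulSingle i z * Pi.mulSingle j w) := by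
  apply Subtype.ext
  show 1 + suV i j * ((suT 2 ![z, w] : Matrix (Fin 2) (Fin 2) ℂ) - 1) * (suV i j)ᴴ = _
  rw [suT_val, suT_val, ← diagonal_one, ← diagonal_one, diagonal_sub]
  ext a b
  rw [Matrix.add_apply, mul_apply, Fin.sum_univ_two, mul_diagonal, mul_diagonal, suV_ct, suV_ct]
  simp only [suV, of_apply]
  by_cases hab : a = b
  · subst hab
    by_cases ha : a = i
    · subst ha; simp [h]
    · by_cases hb : a = j
      · subst hb; simp [ha]
      · simp [ha, hb]
  · have hab' : ¬ b = a := fun h => hab h.symm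
    by_cases ha : a = i
    · subst ha; simp [h, hab, hab']
    · by_cases hb : a = j
      · subst hb; simp [ha, hab, hab']
      · simp [ha, hb, hab]

theorem su_re_lt (a b : Circle) (hab : a ≠ b) : ((a * b⁻¹ : Circle) : ℂ).re < 1 := by
  set u := a * b⁻¹ with hu
  have h1 : ‖(u : ℂ)‖ = 1 := Circle.norm_coe u
  have h2 := Complex.re_le_norm (u : ℂ)
  rw [h1] at h2
  refine lt_of_le_of_ne h2 fun h3 => hab ?_
  have h4 : Complex.normSq (u : ℂ) = 1 := Circle.normSq_coe u
  rw [Complex.normSq_apply, h3] at h4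
  have h5 : (u : ℂ).im = 0 := by nlinarith
  have h6 : (u : ℂ) = 1 := Complex.ext (by simpa using h3) (by simpa using h5)
  have h7 : u = 1 := Circle.ext (by simpa using h6)
  exact mul_inv_eq_one.mp h7

theorem su_rot (a b : Circle) (hab : a ≠ b) (c : ℝ) (hc1 : c ≤ 1)
    (hc : ((a * b⁻¹ : Circle) : ℂ).re ≤ c) :
    ∃ R : Matrix.unitaryGroup (Fin 2) ℂ,
      ((suT 2 ![a, b] * R * (suT 2 ![a, b])⁻¹ * R⁻¹ : Matrix.unitaryGroup (Fin 2) ℂ) :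
        Matrix (Fin 2) (Fin 2) ℂ).trace = 2 * c := by
  set u := a * b⁻¹ with hu
  have hu1 : ((u : Circle) : ℂ).re < 1 := su_re_lt a b hab
  set S := (1 - c) / (1 - (u : ℂ).re) with hS
  have hS0 : 0 ≤ S := div_nonneg (by linarith) (by linarith)
  have hS1 : S ≤ 1 := (div_le_one (by linarith)).mpr (by linarith)
  set s := Real.sqrt S
  set t := Real.sqrt (1 - S)
  have hs : s * s = S := Real.mul_self_sqrt hS0
  have ht : t * t = 1 - S := Real.mul_self_sqrt (by linarith)
  have hst : (t:ℂ) * t + s * s = 1 := by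
    norm_cast; linarith
  refine ⟨⟨!![(t:ℂ), -s; s, t], ?_⟩, ?_⟩
  · rw [mem_unitaryGroup_iff, star_eq_conjTranspose]
    ext i j
    fin_cases i <;> fin_cases j <;> simp [mul_apply, Fin.sum_univ_two] <;> first | linear_combination hst | ring
  · rw [UnitaryGroup.mul_val, UnitaryGroup.mul_val, UnitaryGroup.mul_val, UnitaryGroup.inv_val,
      UnitaryGroup.inv_val, suT_val]
    simp [trace, mul_apply, Fin.sum_univ_two, star_eq_conjTranspose, diagonal_apply]
    have ha : (a : ℂ) * (starRingEnd ℂ) (a : ℂ) = 1 := by simp [Complex.mul_conj]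
    have hb : (b : ℂ) * (starRingEnd ℂ) (b : ℂ) = 1 := by simp [Complex.mul_conj]
    have hre : (a : ℂ) * (starRingEnd ℂ) (b : ℂ) + (b : ℂ) * (starRingEnd ℂ) (a : ℂ)
        = 2 * ((u : ℂ).re : ℂ) := by
      have : (u : ℂ) = (a : ℂ) * (starRingEnd ℂ) (b : ℂ) := by
        rw [hu, Circle.coe_mul, Circle.coe_inv_eq_conj]
      have h2 := Complex.add_conj (u : ℂ)
      rw [this] at h2 ⊢
      rw [map_mul, Complex.conj_conj] at h2
      push_cast at h2
      linear_combination h2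
    have hSc : (S : ℂ) * (1 - ((u : ℂ).re : ℂ)) = 1 - c := by
      have : S * (1 - (u : ℂ).re) = 1 - c := div_mul_cancel₀ _ (by linarith)
      exact_mod_cast this
    have hsC : (s : ℂ) * s = S := by exact_mod_cast hs
    linear_combination (t:ℂ)^2 * ha + (t:ℂ)^2 * hb + (s:ℂ)^2 * hre + 2 * hst
      - 2 * (1 - ((u : ℂ).re : ℂ)) * hsC - 2 * hSc

theorem su_step1 {n : ℕ} (K : Subgroup (Matrix.unitaryGroup (Fin n) ℂ)) (hK : K.Normal)
    (d : Fin n → Circle) (hd : suT n d ∈ K) (i j : Fin n) (hij : d i ≠ d j) (z : Circle)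
    (hz : ((d i * (d j)⁻¹ : Circle) : ℂ).re ≤ (z : ℂ).re) :
    suT n (Pi.mulSingle i z * Pi.mulSingle j z⁻¹) ∈ K := by
  have h : i ≠ j := fun e => hij (by rw [e])
  obtain ⟨R, hR⟩ := su_rot (d i) (d j) hij (z : ℂ).re
    ((Complex.re_le_norm _).trans_eq (Circle.norm_coe z)) hz
  set δ := suT 2 ![d i, d j] with hδ
  set φ := suPhi (suV i j) (suV_iso h) with hφ
  have k1 : φ (δ * R * δ⁻¹ * R⁻¹) ∈ K := by
    rw [map_mul, ← suPhi_conj _ _ (suT n d) δ R (suV_diag i j d)]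
    have : suT n d * φ R * (suT n d)⁻¹ * φ R⁻¹ = suT n d * (φ R * (suT n d)⁻¹ * (φ R)⁻¹) := by
      rw [map_inv]; group
    rw [this]
    exact K.mul_mem hd (hK.conj_mem _ (K.inv_mem hd) _)
  obtain ⟨Q, e, hQ⟩ := su_spec (δ * R * δ⁻¹ * R⁻¹)
  have hdet : ((δ * R * δ⁻¹ * R⁻¹ : Matrix.unitaryGroup (Fin 2) ℂ) : Matrix (Fin 2) (Fin 2) ℂ).det = 1 := by
    have h1 := congrArg det (mem_unitaryGroup_iff.mp δ.2)
    have h2 := congrArg det (mem_unitaryGroup_iff.mp R.2)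
    rw [det_mul, det_one] at h1 h2
    rw [UnitaryGroup.mul_val, UnitaryGroup.mul_val, UnitaryGroup.mul_val, UnitaryGroup.inv_val,
      UnitaryGroup.inv_val, det_mul, det_mul, det_mul]
    linear_combination h1 * det (R : Matrix (Fin 2) (Fin 2) ℂ) * det (star (R : Matrix (Fin 2) (Fin 2) ℂ)) + h2
  have hQQ := mem_unitaryGroup_iff'.mp Q.2
  rw [hQ] at hR hdet k1
  have he : e = ![e 0, e 1] := by ext k; fin_cases k <;> rfl
  rw [UnitaryGroup.mul_val, UnitaryGroup.mul_val, UnitaryGroup.inv_val] at hR hdet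
  rw [trace_mul_comm, ← mul_assoc, hQQ, one_mul, suT_val, trace_diagonal, Fin.sum_univ_two] at hR
  rw [det_mul_comm, ← mul_assoc, hQQ, one_mul, suT_val, det_diagonal, Fin.prod_univ_two] at hdet
  have k2 : suT n (Pi.mulSingle i (e 0) * Pi.mulSingle j (e 1)) ∈ K := by
    rw [← suPhi_diag h, ← he]
    have := hK.conj_mem _ k1 (φ Q)⁻¹
    rw [map_mul, map_mul, map_inv] at this
    convert this using 1
    rw [← hφ]; group
  have h10 : e 1 = (e 0)⁻¹ := by
    rw [eq_comm, inv_eq_iff_mul_eq_one]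
    exact Circle.ext (by simpa using hdet)
  have hzz : (z : ℂ) + ((z⁻¹ : Circle) : ℂ) = 2 * ((z : ℂ).re : ℂ) := by
    rw [Circle.coe_inv_eq_conj, Complex.add_conj]; push_cast; rfl
  have hz1 : (z : ℂ) * ((z⁻¹ : Circle) : ℂ) = 1 := by simp
  have hprod : ((e 0 : ℂ) - z) * ((e 0 : ℂ) - ((z⁻¹ : Circle) : ℂ)) = 0 := by
    linear_combination (e 0 : ℂ) * hR - hdet - (e 0 : ℂ) * hzz + hz1
  rw [h10] at k2
  rcases mul_eq_zero.mp hprod with h0 | h0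
  · have : e 0 = z := Circle.ext (sub_eq_zero.mp h0)
    rwa [this] at k2
  · have : e 0 = z⁻¹ := Circle.ext (sub_eq_zero.mp h0)
    rw [this] at k2
    have := K.inv_mem k2
    rwa [← map_inv, mul_inv, ← Pi.mulSingle_inv, ← Pi.mulSingle_inv, inv_inv] at this

theorem su_step2 {n : ℕ} (K : Subgroup (Matrix.unitaryGroup (Fin n) ℂ)) (hK : K.Normal)
    (d : Fin n → Circle) (hd : suT n d ∈ K) (i j : Fin n) (hij : d i ≠ d j) (z : Circle) :
    suT n (Pi.mulSingle i z * Pi.mulSingle j z⁻¹) ∈ K := by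
  have hu1 : ((d i * (d j)⁻¹ : Circle) : ℂ).re < 1 := su_re_lt _ _ hij
  obtain ⟨θ, rfl⟩ : ∃ θ, Circle.exp θ = z := ⟨_, Circle.exp_arg z⟩
  have ht : Filter.Tendsto (fun m : ℕ => Real.cos (θ / m)) Filter.atTop (nhds 1) := by
    have h0 : Filter.Tendsto (fun m : ℕ => θ / m) Filter.atTop (nhds 0) :=
      tendsto_const_div_atTop_nhds_zero_nat θ
    have h2 := (Real.continuous_cos.tendsto 0).comp h0
    rw [Real.cos_zero] at h2
    exact h2
  obtain ⟨m, hm, hm0⟩ := ((ht.eventually (lt_mem_nhds hu1)).and (Filter.eventually_gt_atTop 0)).exists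
  have h1 := su_step1 K hK d hd i j hij (Circle.exp (θ / m)) (by
    rw [Circle.coe_exp, Complex.exp_ofReal_mul_I_re]; exact hm.le)
  have h2 := K.pow_mem h1 m
  have h3 : Circle.exp (θ / m) ^ m = Circle.exp θ := by
    rw [← Circle.exp_nsmul]; congr 1
    have : (m : ℝ) ≠ 0 := by positivity
    simp; field_simp
  rwa [← map_pow, mul_pow, ← Pi.mulSingle_pow, ← Pi.mulSingle_pow, inv_pow, h3] at h2

theorem su_perm {n : ℕ} (K : Subgroup (Matrix.unitaryGroup (Fin n) ℂ)) (hK : K.Normal)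
    (d : Fin n → Circle) (hd : suT n d ∈ K) (σ : Equiv.Perm (Fin n)) :
    suT n (d ∘ σ) ∈ K := by
  have hP : (1 : Matrix (Fin n) (Fin n) ℂ).submatrix σ id ∈ Matrix.unitaryGroup (Fin n) ℂ := by
    rw [mem_unitaryGroup_iff, star_eq_conjTranspose, conjTranspose_submatrix, conjTranspose_one,
      ← submatrix_mul _ _ _ _ _ Function.bijective_id, one_mul, submatrix_one_equiv]
  have := hK.conj_mem _ hd ⟨_, hP⟩
  convert this using 1
  rw [eq_mul_inv_iff_mul_eq]
  apply Subtype.ext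
  rw [UnitaryGroup.mul_val, UnitaryGroup.mul_val, suT_val, suT_val]
  ext a b
  rw [diagonal_mul, mul_diagonal]
  simp only [Function.comp, submatrix_apply, id]
  by_cases hab : σ a = b
  · rw [hab, mul_comm]
  · have h0 : (1 : Matrix (Fin n) (Fin n) ℂ) (σ a) (id b) = 0 := one_apply_ne hab
    rw [h0, mul_zero, zero_mul]

theorem su_all {n : ℕ} (K : Subgroup (Matrix.unitaryGroup (Fin n) ℂ)) (hK : K.Normal)
    (d : Fin n → Circle) (hd : suT n d ∈ K) (i j : Fin n) (hij : d i ≠ d j) :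
    SU n ≤ K := by
  have h : i ≠ j := fun e => hij (by rw [e])
  have hall : ∀ k, k ≠ i → ∀ z : Circle, suT n (Pi.mulSingle i z⁻¹ * Pi.mulSingle k z) ∈ K := by
    intro k hk z
    have h1 := su_perm K hK _ (su_step2 K hK d hd i j hij z⁻¹) (Equiv.swap j k)
    convert h1 using 2
    ext l
    simp only [Function.comp, Pi.mul_apply, Pi.mulSingle_apply, inv_inv]
    have e1 : (Equiv.swap j k l = i) ↔ l = i := by
      rw [Equiv.swap_apply_eq_iff, Equiv.swap_apply_of_ne_of_ne h hk.symm]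
    have e2 : (Equiv.swap j k l = j) ↔ l = k := by
      rw [Equiv.swap_apply_eq_iff, Equiv.swap_apply_left]
    simp only [e1, e2]
  intro A hA
  obtain ⟨U, e, rfl⟩ := su_spec A
  refine hK.conj_mem _ ?_ U
  have hdet : (∏ k, e k) = 1 := by
    have hA' : ((U * suT n e * U⁻¹ : Matrix.unitaryGroup (Fin n) ℂ) : Matrix (Fin n) (Fin n) ℂ).det = 1 := hA
    have hQQ := mem_unitaryGroup_iff'.mp U.2
    rw [UnitaryGroup.mul_val, UnitaryGroup.mul_val, UnitaryGroup.inv_val,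
      det_mul_comm, ← mul_assoc, hQQ, one_mul, suT_val, det_diagonal] at hA'
    apply Circle.ext
    rw [Circle.coe_one, ← hA']
    exact map_prod Circle.coeHom _ _
  have key : e = ∏ k, (Pi.mulSingle i (e k)⁻¹ * Pi.mulSingle k (e k)) := by
    rw [Finset.prod_mul_distrib, Finset.univ_prod_mulSingle]
    have : ∏ k, (Pi.mulSingle i (e k)⁻¹ : Fin n → Circle) = 1 := by
      have := map_prod (MonoidHom.mulSingle (fun _ : Fin n => Circle) i) (fun k => (e k)⁻¹) Finset.univ
      rw [Finset.prod_inv_distrib, hdet, inv_one, map_one] at this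
      exact this.symm
    rw [this, one_mul]
  rw [key]
  change _ ∈ K.comap (suT n)
  refine Subgroup.prod_mem _ fun k _ => ?_
  change suT n _ ∈ K
  by_cases hk : k = i
  · subst hk
    rw [← Pi.mulSingle_mul, inv_mul_cancel, Pi.mulSingle_one, map_one]; exact K.one_mem
  · exact hall k hk _

theorem suT_const_comm {n : ℕ} (c : Circle) (A : Matrix.unitaryGroup (Fin n) ℂ) :
    suT n (fun _ => c) * A = A * suT n (fun _ => c) := by
  apply Subtype.ext
  rw [UnitaryGroup.mul_val, UnitaryGroup.mul_val, suT_val]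
  ext a b
  rw [diagonal_mul, mul_diagonal, mul_comm]

theorem su_normal {n : ℕ} (hn : 2 ≤ n) (N : Subgroup ↥(SU n)) (hN : N.Normal) :
    (N.map (SU n).subtype).Normal := by
  constructor
  rintro _ ⟨g, hg, rfl⟩ u
  obtain ⟨c, hc⟩ : ∃ c : Circle, u * suT n (fun _ => c) ∈ SU n := by
    obtain ⟨U, e, hU⟩ := su_spec u
    have hdet : (u : Matrix (Fin n) (Fin n) ℂ).det = ((∏ k, e k : Circle) : ℂ) := by
      have hQQ := mem_unitaryGroup_iff'.mp U.2
      rw [hU, UnitaryGroup.mul_val, UnitaryGroup.mul_val, UnitaryGroup.inv_val,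
        det_mul_comm, ← mul_assoc, hQQ, one_mul, suT_val, det_diagonal]
      exact (map_prod Circle.coeHom _ _).symm
    set p := ∏ k, e k
    refine ⟨Circle.exp (-Complex.arg p / n), ?_⟩
    show ((u * suT n _ : Matrix.unitaryGroup (Fin n) ℂ) : Matrix (Fin n) (Fin n) ℂ).det = 1
    rw [UnitaryGroup.mul_val, det_mul, hdet, suT_val, det_diagonal, Finset.prod_const,
      Finset.card_univ, Fintype.card_fin, ← Circle.coe_pow, ← Circle.exp_nsmul, ← Circle.coe_mul]
    have : n • (-Complex.arg p / n) = -Complex.arg p := by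
      have : (n : ℝ) ≠ 0 := by positivity
      simp; field_simp
    rw [this, Circle.exp_neg, Circle.exp_arg, mul_inv_cancel, Circle.coe_one]
  have key : u * (g : Matrix.unitaryGroup (Fin n) ℂ) * u⁻¹ = (u * suT n (fun _ => c)) *
      (g : Matrix.unitaryGroup (Fin n) ℂ) * (u * suT n (fun _ => c))⁻¹ := by
    rw [mul_assoc u (suT n fun _ => c), suT_const_comm c (g : Matrix.unitaryGroup (Fin n) ℂ)]; group
  rw [Subgroup.subtype_apply, key]
  generalize u * suT n (fun _ => c) = v at hc
  exact ⟨(⟨v, hc⟩ : ↥(SU n)) * g * (⟨v, hc⟩ : ↥(SU n))⁻¹, hN.conj_mem _ hg _, rfl⟩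

end

/-- For `n ≥ 2`, every normal subgroup of `SU(n)` is either contained in the center
or is all of `SU(n)`. -/
theorem stmt_5 (n : ℕ) (hn : 2 ≤ n) (N : Subgroup ↥(SU n)) (hN : N.Normal) :
    N ≤ Subgroup.center ↥(SU n) ∨ N = ⊤ := by
  by_cases hc : N ≤ Subgroup.center ↥(SU n)
  · exact Or.inl hc
  right
  obtain ⟨g, hg, hgc⟩ := Set.not_subset.mp hc
  have hK := su_normal hn N hN
  obtain ⟨U, d, hU⟩ := su_spec (g : Matrix.unitaryGroup (Fin n) ℂ)
  have hd : suT n d ∈ N.map (SU n).subtype := by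
    have h1 : (g : Matrix.unitaryGroup (Fin n) ℂ) ∈ N.map (SU n).subtype := ⟨g, hg, rfl⟩
    have := hK.conj_mem _ h1 U⁻¹
    rw [hU] at this
    convert this using 1
    group
  have hne : ∃ i j, d i ≠ d j := by
    by_contra! hcon
    apply hgc
    have hdc : d = fun _ => d ⟨0, by omega⟩ := funext fun k => hcon _ _
    rw [SetLike.mem_coe, Subgroup.mem_center_iff]
    intro x
    apply Subtype.ext
    rw [Subgroup.coe_mul, Subgroup.coe_mul, hU, hdc, ← suT_const_comm, mul_inv_cancel_right,
      suT_const_comm]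
  obtain ⟨i, j, hij⟩ := hne
  have hall := su_all _ hK d hd i j hij
  rw [eq_top_iff]
  intro x _
  obtain ⟨y, hy, hxy⟩ := hall x.2
  have : y = x := Subtype.ext hxy
  exact this ▸ hy
end

section
/- Let $a_1, a_2, b_1, b_2$ be nonzero complex numbers with $a_1 \neq a_2$ and $b_1 \neq b_2$. If the set $\{a_1 b_1, a_1 b_2, a_2 b_1, a_2 b_2\}$ has exactly two elements $x$ and $y$, then $y = -x$ (the ratio of the two distinct products is $-1$). -/
/-- If `a₁ ≠ a₂`, `b₁ ≠ b₂` are nonzero complex numbers and the four products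
`aᵢbⱼ` take exactly two values `x ≠ y`, then `y = -x`. -/
theorem stmt_9 (a₁ a₂ b₁ b₂ : ℂ) (ha₁ : a₁ ≠ 0) (ha₂ : a₂ ≠ 0)
    (hb₁ : b₁ ≠ 0) (hb₂ : b₂ ≠ 0) (ha : a₁ ≠ a₂) (hb : b₁ ≠ b₂)
    (x y : ℂ) (hxy : x ≠ y)
    (hset : ({a₁ * b₁, a₁ * b₂, a₂ * b₁, a₂ * b₂} : Set ℂ) = {x, y}) :
    y = -x := by
  have h1 : a₁ * b₁ = x ∨ a₁ * b₁ = y := by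
    have : a₁ * b₁ ∈ ({x, y} : Set ℂ) := by rw [← hset]; simp
    simpa only [Set.mem_insert_iff, Set.mem_singleton_iff] using this
  have h2 : a₁ * b₂ = x ∨ a₁ * b₂ = y := by
    have : a₁ * b₂ ∈ ({x, y} : Set ℂ) := by rw [← hset]; simp
    simpa only [Set.mem_insert_iff, Set.mem_singleton_iff] using this
  have h3 : a₂ * b₁ = x ∨ a₂ * b₁ = y := by
    have : a₂ * b₁ ∈ ({x, y} : Set ℂ) := by rw [← hset]; simp
    simpa only [Set.mem_insert_iff, Set.mem_singleton_iff] using this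
  have h4 : a₂ * b₂ = x ∨ a₂ * b₂ = y := by
    have : a₂ * b₂ ∈ ({x, y} : Set ℂ) := by rw [← hset]; simp
    simpa only [Set.mem_insert_iff, Set.mem_singleton_iff] using this
  have n12 : a₁ * b₁ ≠ a₁ * b₂ := fun h => hb (mul_left_cancel₀ ha₁ h)
  have n13 : a₁ * b₁ ≠ a₂ * b₁ := fun h => ha (mul_right_cancel₀ hb₁ h)
  have n24 : a₁ * b₂ ≠ a₂ * b₂ := fun h => ha (mul_right_cancel₀ hb₂ h)
  have hp : (a₁ * b₁) * (a₂ * b₂) = (a₁ * b₂) * (a₂ * b₁) := by ring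
  have hs : y * y = x * x := by
    generalize a₁ * b₁ = p at *
    generalize a₁ * b₂ = q at *
    generalize a₂ * b₁ = r at *
    generalize a₂ * b₂ = s at *
    clear hset
    rcases h1 with rfl | rfl <;> rcases h2 with rfl | rfl <;>
      rcases h3 with rfl | rfl <;> rcases h4 with rfl | rfl <;> simp_all
  rcases mul_self_eq_mul_self_iff.mp hs with h | h
  · exact absurd h.symm hxy
  · exact h
end

section
/- Let $q = e^{2\pi i/5}$, let $[3] = q + q^{-1} + 1$ (a positive real number), and define the $2 \times 2$ complex matrices $U_1 = \begin{pmatrix} -1 & 0 \\ 0 & q \end{pmatrix}$ and $U_2 = \begin{pmatrix} \frac{q^2}{q+1} & -\frac{q\sqrt{[3]}}{q+1} \\ -\frac{q\sqrt{[3]}}{q+1} & -\frac{1}{q+1} \end{pmatrix}$, where $\sqrt{[3]}$ is the positive real square root of $[3]$. Then $U_1 U_2 U_1 = U_2 U_1 U_2$, so $U_1, U_2$ define a representation of the braid group $B_3$. -/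
open Matrix

/-- The matrices of the Jones representation `ρ_{[2,1],β,3}` of the braid group `B₃`
at the fifth root of unity satisfy the braid relation `U₁U₂U₁ = U₂U₁U₂`.
Here `q = e^{2πi/5}`, `[3] = q + q⁻¹ + 1`, and `s = √[3]` is the nonnegative real
square root of `[3]`. -/
theorem stmt_16 (q : ℂ) (hq : q = Complex.exp (2 * Real.pi * Complex.I / 5))
    (s : ℝ) (hs : 0 ≤ s) (hs2 : (s : ℂ) ^ 2 = q + q⁻¹ + 1)
    (U₁ U₂ : Matrix (Fin 2) (Fin 2) ℂ)
    (hU₁ : U₁ = !![-1, 0; 0, q])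
    (hU₂ : U₂ = !![q ^ 2 / (q + 1), -(q * (s : ℂ)) / (q + 1);
                   -(q * (s : ℂ)) / (q + 1), -1 / (q + 1)]) :
    U₁ * U₂ * U₁ = U₂ * U₁ * U₂ := by
  have h0 : q ≠ 0 := by rw [hq]; exact Complex.exp_ne_zero _
  have h5 : q ^ 5 = 1 := by
    rw [hq, ← Complex.exp_nat_mul, ← Complex.exp_two_pi_mul_I]
    congr 1
    push_cast
    ring
  have h1 : q + 1 ≠ 0 := by
    intro h
    have h2 : q = -1 := by linear_combination h
    rw [h2] at h5
    norm_num at h5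
  have h3 : q * (s : ℂ) ^ 2 = q ^ 2 + 1 + q := by
    rw [hs2]
    field_simp
  subst hU₁ hU₂
  ext i j
  fin_cases i <;> fin_cases j <;> simp [Matrix.mul_apply, Fin.sum_univ_two]
  · rw [← sub_eq_zero]
    have : q ^ 2 / (q + 1) - (-(q ^ 2 / (q + 1) * (q ^ 2 / (q + 1))) + -(q * s) / (q + 1) * q * (-(q * s) / (q + 1))) = q ^ 2 * (q ^ 2 + 1 + q - q * s ^ 2) / (q + 1) ^ 2 := by
      field_simp
      ring
    linear_combination this - q ^ 2 / (q + 1) ^ 2 * h3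
  · field_simp
  · field_simp
  · rw [← sub_eq_zero]
    have : -1 / (q + 1) * q * q - (-(-(q * s) / (q + 1) * (-(q * s) / (q + 1))) + -1 / (q + 1) * q * (-1 / (q + 1))) = q * (q * s ^ 2 - (q ^ 2 + 1 + q)) / (q + 1) ^ 2 := by
      field_simp
      ring
    linear_combination this + q / (q + 1) ^ 2 * h3
end
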